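/- Let γ₀ : [0,1] → ℝ² be an unconstrained minimizing geodesic joining p₋ to p₊. Then there exists ε₁ > 0 such that for every A with |A − 𝒜(γ₀)| < ε₁, the isoperimetric problem with constraint A has a solution γ_A : [a,b] → ℝ² which meets the wells only at its endpoints: γ_A(t) ∉ {p₋, p₊} for all t ∈ (a,b) (i.e. the solution contains no bubbles through the wells). -/

import Mathlib

open MeasureTheory Set Filter Topology
open scoped ENNReal

noncomputable section

/-- The Euclidean norm of a vector in `ℝ × ℝ`. -/
def enorm2 (v : ℝ × ℝ) : ℝ := Real.sqrt (v.1 ^ 2 + v.2 ^ 2)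

/-- The degenerate length `E(γ) = ∫ₐᵇ F(γ(t)) |γ'(t)| dt` of a planar curve. -/
def degLen (F : ℝ × ℝ → ℝ) (a b : ℝ) (γ : ℝ → ℝ × ℝ) : ℝ :=
  ∫ t in a..b, F (γ t) * enorm2 (deriv γ t)

/-- The signed area `𝒜(γ) = ∫ₐᵇ γ¹(t) (γ²)'(t) dt` of a planar curve. -/
def sArea (a b : ℝ) (γ : ℝ → ℝ × ℝ) : ℝ :=
  ∫ t in a..b, (γ t).1 * deriv (fun s => (γ s).2) t

/-- A locally Lipschitz curve on `[a,b]` joining `p` to `q`. -/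
def IsCurve (a b : ℝ) (γ : ℝ → ℝ × ℝ) (p q : ℝ × ℝ) : Prop :=
  a ≤ b ∧ LocallyLipschitz γ ∧ γ a = p ∧ γ b = q

/-- The standing hypotheses on the potential `W`: smooth, nonnegative, vanishing exactly at the
two distinct wells `pm` and `pp`, with positive definite Hessians there, and bounded away from
zero near infinity (`liminf_{|p|→∞} W(p) > 0`). -/
structure TwoWell (W : ℝ × ℝ → ℝ) (pm pp : ℝ × ℝ) : Prop where
  smooth : ContDiff ℝ (⊤ : ℕ∞) W
  nonneg : ∀ p, 0 ≤ W p
  wells_ne : pm ≠ pp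
  zeroSet : ∀ p, W p = 0 ↔ p = pm ∨ p = pp
  hess_m : ∀ v : ℝ × ℝ, v ≠ 0 → 0 < iteratedFDeriv ℝ 2 W pm ![v, v]
  hess_p : ∀ v : ℝ × ℝ, v ≠ 0 → 0 < iteratedFDeriv ℝ 2 W pp ![v, v]
  coercive : ∃ c > 0, ∃ R : ℝ, ∀ p : ℝ × ℝ, R ≤ ‖p‖ → c ≤ W p

/-- `γ : [a,b] → ℝ²` solves the isoperimetric problem with constraint `A`: it is a locally
Lipschitz curve from `pm` to `pp` with signed area `A` minimizing the degenerate length `E`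
among all such curves. -/
def IsoSol (F : ℝ × ℝ → ℝ) (pm pp : ℝ × ℝ) (A : ℝ) (a b : ℝ) (γ : ℝ → ℝ × ℝ) : Prop :=
  IsCurve a b γ pm pp ∧ sArea a b γ = A ∧
  ∀ a' b' γ', IsCurve a' b' γ' pm pp → sArea a' b' γ' = A →
    degLen F a b γ ≤ degLen F a' b' γ'

open scoped NNReal

def J (Φ : ℝ × ℝ → ℝ × ℝ → ℝ) (a b : ℝ) (γ : ℝ → ℝ × ℝ) : ℝ :=
  ∫ t in a..b, Φ (γ t) (deriv γ t)

lemma ll_bound {E : Type*} [PseudoMetricSpace E] {γ : ℝ → E} (h : LocallyLipschitz γ) (a b : ℝ) :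
    ∃ K : ℝ≥0, LipschitzOnWith K γ (Icc a b) :=
  LocallyLipschitzOn.exists_lipschitzOnWith_of_compact isCompact_Icc (h.locallyLipschitzOn)

lemma ll_ae_diff {E : Type*} [NormedAddCommGroup E] [NormedSpace ℝ E] [FiniteDimensional ℝ E]
    {γ : ℝ → E} (h : LocallyLipschitz γ) : ∀ᵐ t, DifferentiableAt ℝ γ t := by
  have h1 : ∀ n : ℕ, ∀ᵐ t, t ∈ Icc (-(n:ℝ)) n → DifferentiableWithinAt ℝ γ (Icc (-(n:ℝ)) n) t := by
    intro n
    obtain ⟨K, hK⟩ := ll_bound h (-(n:ℝ)) n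
    exact hK.ae_differentiableWithinAt_of_mem_real
  rw [← ae_all_iff] at h1
  filter_upwards [h1] with t ht
  obtain ⟨n, hn⟩ := exists_nat_gt |t|
  have := abs_lt.1 hn
  exact (ht n ⟨this.1.le, this.2.le⟩).differentiableAt (Icc_mem_nhds this.1 this.2)

lemma ll_deriv_bound {E : Type*} [NormedAddCommGroup E] [NormedSpace ℝ E]
    {γ : ℝ → E} (h : LocallyLipschitz γ) (a b : ℝ) :
    ∃ K : ℝ, 0 ≤ K ∧ ∀ t ∈ Icc a b, ‖deriv γ t‖ ≤ K := by
  obtain ⟨K, hK⟩ := ll_bound h (a-1) (b+1)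
  refine ⟨K, K.2, fun t ht => ?_⟩
  exact norm_deriv_le_of_lipschitzOn (Icc_mem_nhds (by linarith [ht.1]) (by linarith [ht.2])) hK

lemma J_int {Φ : ℝ × ℝ → ℝ × ℝ → ℝ} (hΦ : Continuous (Function.uncurry Φ)) {γ : ℝ → ℝ × ℝ}
    (h : LocallyLipschitz γ) (a b : ℝ) :
    IntervalIntegrable (fun t => Φ (γ t) (deriv γ t)) volume a b := by
  have hm : Measurable (fun t => Φ (γ t) (deriv γ t)) := by
    have : Measurable (fun t => (γ t, deriv γ t)) :=
      h.continuous.measurable.prodMk (measurable_deriv γ)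
    exact hΦ.measurable.comp this
  obtain ⟨K, hK0, hK⟩ := ll_deriv_bound h (min a b) (max a b)
  have hc : IsCompact ((γ '' Icc (min a b) (max a b)) ×ˢ Metric.closedBall (0 : ℝ × ℝ) K) :=
    (isCompact_Icc.image h.continuous).prod (isCompact_closedBall _ _)
  obtain ⟨M, hM⟩ := hc.exists_bound_of_continuousOn hΦ.continuousOn
  have hc : IntervalIntegrable (fun _ : ℝ => M) volume a b := intervalIntegrable_const
  refine hc.mono_fun' hm.aestronglyMeasurable ?_
  refine (ae_restrict_mem measurableSet_uIoc).mono ?_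
  intro t ht
  have ht' : t ∈ Icc (min a b) (max a b) := ⟨ht.1.le, ht.2⟩
  have := hM (γ t, deriv γ t) ⟨mem_image_of_mem _ ht', by simpa using hK t ht'⟩
  simpa using this

lemma ftc {u : ℝ → ℝ} (h : LocallyLipschitz u) (a b : ℝ) :
    ∫ t in a..b, deriv u t = u b - u a := by
  obtain ⟨K, hK⟩ := ll_bound h (min a b) (max a b)
  exact (LipschitzOnWith.absolutelyContinuousOnInterval (K := K) hK).integral_deriv_eq_sub

lemma ftc_comp {f : ℝ × ℝ → ℝ} (hf : ContDiff ℝ 1 f) {γ : ℝ → ℝ × ℝ}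
    (h : LocallyLipschitz γ) (a b : ℝ) :
    J (fun p v => fderiv ℝ f p v) a b γ = f (γ b) - f (γ a) := by
  refine Eq.trans ?_ (ftc (u := f ∘ γ) (hf.locallyLipschitz.comp h) a b)
  apply intervalIntegral.integral_congr_ae
  filter_upwards [ll_ae_diff h] with t ht _
  have := ((hf.differentiable one_ne_zero (γ t)).hasFDerivAt).comp_hasDerivAt t ht.hasDerivAt
  exact this.deriv.symm

lemma sArea_eq {γ : ℝ → ℝ × ℝ} (h : LocallyLipschitz γ) (a b : ℝ) :
    sArea a b γ = J (fun p v => p.1 * v.2) a b γ := by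
  apply intervalIntegral.integral_congr_ae
  filter_upwards [ll_ae_diff h] with t ht _
  have := (hasFDerivAt_snd (𝕜 := ℝ) (p := γ t)).comp_hasDerivAt t ht.hasDerivAt
  have h2 : deriv (fun s => (γ s).2) t = (deriv γ t).2 := this.deriv
  simp only [h2]

lemma J_mono {Φ Ψ : ℝ × ℝ → ℝ × ℝ → ℝ} (hΦ : Continuous (Function.uncurry Φ))
    (hΨ : Continuous (Function.uncurry Ψ)) {γ : ℝ → ℝ × ℝ}
    (h : LocallyLipschitz γ) {a b : ℝ} (hab : a ≤ b)
    (hle : ∀ t ∈ Icc a b, Φ (γ t) (deriv γ t) ≤ Ψ (γ t) (deriv γ t)) :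
    J Φ a b γ ≤ J Ψ a b γ :=
  intervalIntegral.integral_mono_on hab (J_int hΦ h a b) (J_int hΨ h a b) hle

lemma J_add {Φ : ℝ × ℝ → ℝ × ℝ → ℝ} (hΦ : Continuous (Function.uncurry Φ)) {γ : ℝ → ℝ × ℝ}
    (h : LocallyLipschitz γ) (a b c : ℝ) : J Φ a b γ + J Φ b c γ = J Φ a c γ :=
  intervalIntegral.integral_add_adjacent_intervals (J_int hΦ h a b) (J_int hΦ h b c)

/-- The integrals only depend on the curve in the open interval. -/
lemma J_congr {Φ : ℝ × ℝ → ℝ × ℝ → ℝ} {γ β : ℝ → ℝ × ℝ} {a b : ℝ} (hab : a ≤ b)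
    (h : EqOn γ β (Ioo a b)) : J Φ a b γ = J Φ a b β := by
  unfold J
  rw [intervalIntegral.integral_of_le hab, intervalIntegral.integral_of_le hab,
    integral_Ioc_eq_integral_Ioo, integral_Ioc_eq_integral_Ioo]
  apply setIntegral_congr_fun measurableSet_Ioo
  intro t ht
  have : γ =ᶠ[𝓝 t] β := by
    filter_upwards [Ioo_mem_nhds ht.1 ht.2] with s hs using h hs
  simp only [h ht, this.deriv_eq]

lemma cont_norm : Continuous (Function.uncurry (fun (_ v : ℝ × ℝ) => ‖v‖)) := by
  unfold Function.uncurry; fun_prop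

lemma norm_sub_le_J {γ : ℝ → ℝ × ℝ} (h : LocallyLipschitz γ) {a b : ℝ} (hab : a ≤ b) :
    ‖γ b - γ a‖ ≤ J (fun _ v => ‖v‖) a b γ := by
  have h1 : ∀ f : ℝ × ℝ →L[ℝ] ℝ, (∀ v, |f v| ≤ ‖v‖) → |f (γ b) - f (γ a)| ≤ J (fun _ v => ‖v‖) a b γ := by
    intro f hf
    have e := ftc_comp (f := f) f.contDiff h a b
    have c : Continuous (Function.uncurry (fun p v : ℝ × ℝ => fderiv ℝ f p v)) := by
      simp only [ContinuousLinearMap.fderiv]; unfold Function.uncurry; fun_prop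
    rw [← e]
    unfold J
    refine (intervalIntegral.abs_integral_le_integral_abs hab).trans ?_
    refine intervalIntegral.integral_mono_on hab (J_int c h a b).abs (J_int cont_norm h a b) ?_
    intro t _
    simpa using hf (deriv γ t)
  rw [Prod.norm_def, max_le_iff]
  constructor
  · simpa using h1 (ContinuousLinearMap.fst ℝ ℝ ℝ) (fun v => by simpa using norm_fst_le v)
  · simpa using h1 (ContinuousLinearMap.snd ℝ ℝ ℝ) (fun v => by simpa using norm_snd_le v)

lemma J_reparam {Φ : ℝ × ℝ → ℝ × ℝ → ℝ} (hom : ∀ p v, ∀ c : ℝ, 0 < c → Φ p (c • v) = c * Φ p v)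
    {σ τ : ℝ → ℝ} {K : ℝ≥0} {δ : ℝ} (hδ : 0 < δ) (hσ : LipschitzWith K σ)
    (hinc : ∀ s t, s ≤ t → δ * (t - s) ≤ σ t - σ s) (h1 : ∀ t, τ (σ t) = t) (h2 : ∀ t, σ (τ t) = t)
    (hτ : Continuous τ)
    {γ : ℝ → ℝ × ℝ} (h : LocallyLipschitz γ) {a b : ℝ} (hab : a ≤ b) :
    J Φ (σ a) (σ b) (γ ∘ τ) = J Φ a b γ := by
  have hsm : StrictMono σ := fun s t hst => by
    have := hinc s t hst.le
    nlinarith [mul_pos hδ (sub_pos.2 hst)]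
  set D : Set ℝ := {t | DifferentiableAt ℝ σ t} ∩ {t | DifferentiableAt ℝ γ t} with hD
  have hDm : MeasurableSet D := (measurableSet_of_differentiableAt ℝ σ).inter
    (measurableSet_of_differentiableAt ℝ γ)
  have hDn : volume Dᶜ = 0 := by
    have : ∀ᵐ t, t ∈ D := by
      filter_upwards [hσ.ae_differentiableAt_real, ll_ae_diff h] with t a b using ⟨a, b⟩
    exact this
  have himn : volume (σ '' Dᶜ) = 0 := by
    have := hσ.hausdorffMeasure_image_le (d := 1) zero_le_one Dᶜ
    rw [hausdorffMeasure_real, hDn, mul_zero] at this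
    exact le_antisymm this bot_le
  have him : σ '' (Ioc a b) = Ioc (σ a) (σ b) := by
    ext s
    constructor
    · rintro ⟨t, ht, rfl⟩
      exact ⟨hsm ht.1, hsm.monotone ht.2⟩
    · intro hs
      refine ⟨τ s, ⟨?_, ?_⟩, h2 s⟩
      · rw [← hsm.lt_iff_lt, h2]; exact hs.1
      · rw [← hsm.le_iff_le, h2]; exact hs.2
  have hinj := hsm.injective
  have e1 : σ '' (Ioc a b ∩ D) =ᵐ[volume] Ioc (σ a) (σ b) := by
    rw [← him]
    refine (LE.le.eventuallyLE (image_mono inter_subset_left)).antisymm ?_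
    have : ∀ᵐ s, s ∉ σ '' Dᶜ := measure_eq_zero_iff_ae_notMem.1 himn
    filter_upwards [this] with s hs hs'
    obtain ⟨t, ht, rfl⟩ := hs'
    refine ⟨t, ⟨ht, ?_⟩, rfl⟩
    by_contra hc
    exact hs ⟨t, hc, rfl⟩
  have e2 : (Ioc a b ∩ D : Set ℝ) =ᵐ[volume] Ioc a b := by
    refine (LE.le.eventuallyLE inter_subset_left).antisymm ?_
    have : ∀ᵐ s, s ∉ Dᶜ := measure_eq_zero_iff_ae_notMem.1 hDn
    filter_upwards [this] with s hs hs'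
    exact ⟨hs', not_not.1 hs⟩
  unfold J
  rw [intervalIntegral.integral_of_le hab, intervalIntegral.integral_of_le (hsm.monotone hab),
    ← setIntegral_congr_set e1, ← setIntegral_congr_set e2,
    integral_image_eq_integral_abs_deriv_smul (f' := deriv σ) (measurableSet_Ioc.inter hDm)
      (fun x hx => hx.2.1.hasDerivAt.hasDerivWithinAt) hinj.injOn]
  apply setIntegral_congr_fun (measurableSet_Ioc.inter hDm)
  intro t ht
  have hpos : δ ≤ deriv σ t := by
    have hs := (hasDerivAt_iff_tendsto_slope.1 ht.2.1.hasDerivAt)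
    refine ge_of_tendsto hs ?_
    filter_upwards [self_mem_nhdsWithin] with s hs
    rw [slope_def_field]
    rcases lt_or_gt_of_ne hs with hlt | hlt
    · have := hinc s t hlt.le
      rw [← neg_sub (σ t), ← neg_sub t, neg_div_neg_eq, le_div_iff₀ (by linarith)]
      linarith
    · have := hinc t s hlt.le
      rw [le_div_iff₀ (by linarith)]
      linarith
  have hpos' : 0 < deriv σ t := hδ.trans_le hpos
  have hτd : HasDerivAt τ (deriv σ t)⁻¹ (σ t) := by
    refine HasDerivAt.of_local_left_inverse hτ.continuousAt ?_ hpos'.ne'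
      (Eventually.of_forall h2)
    rw [h1]; exact ht.2.1.hasDerivAt
  have hg : HasDerivAt (γ ∘ τ) ((deriv σ t)⁻¹ • deriv γ t) (σ t) := by
    refine HasDerivAt.scomp (σ t) ?_ hτd
    rw [h1]; exact ht.2.2.hasDerivAt
  simp only [hg.deriv, Function.comp, h1, smul_eq_mul]
  rw [hom _ _ _ (inv_pos.2 hpos'), abs_of_pos hpos', ← mul_assoc, mul_inv_cancel₀ hpos'.ne', one_mul]

lemma en_nonneg (v : ℝ × ℝ) : 0 ≤ enorm2 v := Real.sqrt_nonneg _

lemma en_cont : Continuous enorm2 := by unfold enorm2; fun_prop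

lemma norm_le_en (v : ℝ × ℝ) : ‖v‖ ≤ enorm2 v := by
  rw [Prod.norm_def, max_le_iff]
  constructor <;> apply Real.abs_le_sqrt <;> nlinarith [sq_nonneg v.1, sq_nonneg v.2]

lemma en_le_norm (v : ℝ × ℝ) : enorm2 v ≤ 2 * ‖v‖ := by
  have h1 : |v.1| ≤ ‖v‖ := norm_fst_le v
  have h2 : |v.2| ≤ ‖v‖ := norm_snd_le v
  apply Real.sqrt_le_iff.2
  refine ⟨by positivity, ?_⟩
  rw [← sq_abs v.1, ← sq_abs v.2]
  nlinarith [abs_nonneg v.1, abs_nonneg v.2, norm_nonneg v]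

lemma en_smul (c : ℝ) (hc : 0 < c) (v : ℝ × ℝ) : enorm2 (c • v) = c * enorm2 v := by
  unfold enorm2
  rw [← Real.sqrt_sq hc.le, ← Real.sqrt_mul (sq_nonneg c), Real.sqrt_sq hc.le]
  congr 1
  simp; ring

lemma en_cs (x v : ℝ × ℝ) : x.1 * v.1 + x.2 * v.2 ≤ enorm2 x * enorm2 v := by
  unfold enorm2
  rw [← Real.sqrt_mul (by positivity)]
  apply Real.le_sqrt_of_sq_le
  nlinarith [sq_nonneg (x.1 * v.2 - x.2 * v.1)]

lemma en_sq (v : ℝ × ℝ) : enorm2 v ^ 2 = v.1 ^ 2 + v.2 ^ 2 := Real.sq_sqrt (by positivity)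

lemma weak_conv {g : ℝ → ℝ} (hg : IntervalIntegrable g volume 0 1) (L : ℝ≥0) {ε : ℝ} (hε : 0 < ε) :
    ∃ C : ℝ, 0 ≤ C ∧ ∀ w : ℝ → ℝ, LipschitzWith L w → ∀ δ : ℝ, 0 ≤ δ →
      (∀ t ∈ Icc (0:ℝ) 1, |w t| ≤ δ) → |∫ t in (0:ℝ)..1, g t * deriv w t| ≤ ε + C * δ := by
  have hη : 0 < ε / (2 * (L + 1)) := by positivity
  set η := ε / (2 * (L + 1)) with hηd
  have hg1 : Integrable g (volume.restrict (Ioc 0 1)) := hg.1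
  obtain ⟨k, -, hk1, hkc, hki⟩ := hg1.exists_hasCompactSupport_integral_sub_le hη
  obtain ⟨p, hp⟩ := exists_polynomial_near_of_continuousOn 0 1 k hkc.continuousOn η hη
  set φ : ℝ → ℝ := fun x => p.eval x with hφ
  have hφc : Continuous φ := p.continuous
  have hφd : ∀ x, HasDerivAt φ (p.derivative.eval x) x := fun x => p.hasDerivAt x
  have hpc : Continuous (fun x => p.derivative.eval x) := p.derivative.continuous
  have hcd : ContDiff ℝ 1 φ := contDiff_one_iff_deriv.2
    ⟨fun x => (hφd x).differentiableAt, by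
      rw [show deriv φ = fun x => p.derivative.eval x from funext fun x => (hφd x).deriv]; exact hpc⟩
  refine ⟨|φ 1| + |φ 0| + ∫ t in (0:ℝ)..1, |p.derivative.eval t|, ?_, ?_⟩
  · have : 0 ≤ ∫ t in (0:ℝ)..1, |p.derivative.eval t| :=
      intervalIntegral.integral_nonneg zero_le_one (fun _ _ => abs_nonneg _)
    positivity
  intro w hw δ hδ hwδ
  have hwd : ∀ t, |deriv w t| ≤ L := fun t => norm_deriv_le_of_lipschitz hw
  have hwm : Measurable (deriv w) := measurable_deriv w
  have hwac : AbsolutelyContinuousOnInterval w 0 1 :=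
    (hw.lipschitzOnWith (s := uIcc 0 1)).absolutelyContinuousOnInterval
  have hφac : AbsolutelyContinuousOnInterval φ 0 1 :=
    hcd.contDiffOn.absolutelyContinuousOnInterval
  have hdw : IntervalIntegrable (deriv w) volume 0 1 := hwac.intervalIntegrable_deriv
  have i1 : IntervalIntegrable (fun t => φ t * deriv w t) volume 0 1 :=
    hdw.continuousOn_mul hφc.continuousOn
  have igφ : IntervalIntegrable (fun t => g t - φ t) volume 0 1 :=
    hg.sub (hφc.intervalIntegrable 0 1)
  have ikφ : IntervalIntegrable (fun t => g t - k t) volume 0 1 :=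
    hg.sub (hkc.intervalIntegrable 0 1)
  have i2 : IntervalIntegrable (fun t => (g t - φ t) * deriv w t) volume 0 1 := by
    refine IntervalIntegrable.mono_fun' (igφ.norm.mul_const (L : ℝ)) ?_ ?_
    · exact igφ.def'.aestronglyMeasurable.mul hwm.aestronglyMeasurable
    · refine Eventually.of_forall fun t => ?_
      change ‖_ * _‖ ≤ _
      rw [norm_mul]
      exact mul_le_mul_of_nonneg_left (hwd t) (norm_nonneg _)
  have e : (fun t => g t * deriv w t) = fun t => (g t - φ t) * deriv w t + φ t * deriv w t := by
    ext t; ring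
  have b1 : |∫ t in (0:ℝ)..1, (g t - φ t) * deriv w t| ≤ ε := by
    calc |∫ t in (0:ℝ)..1, (g t - φ t) * deriv w t| ≤ ∫ t in (0:ℝ)..1, |(g t - φ t) * deriv w t| :=
          intervalIntegral.abs_integral_le_integral_abs zero_le_one
      _ ≤ ∫ t in (0:ℝ)..1, (|g t - k t| + η) * L := by
          refine intervalIntegral.integral_mono_on zero_le_one i2.abs
            ((ikφ.abs.add intervalIntegrable_const).mul_const _) ?_
          intro t ht
          rw [abs_mul]
          refine mul_le_mul ?_ (hwd t) (abs_nonneg _) (by positivity)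
          have := hp t ht
          have h3 := abs_sub_le (g t) (k t) (φ t)
          rw [abs_sub_comm (k t)] at h3
          linarith
      _ = (∫ t in (0:ℝ)..1, |g t - k t|) * L + η * L := by
          rw [intervalIntegral.integral_mul_const, intervalIntegral.integral_add ikφ.abs
            intervalIntegrable_const]
          simp; ring
      _ ≤ η * L + η * L := by
          have : (∫ t in (0:ℝ)..1, |g t - k t|) ≤ η := by
            rw [intervalIntegral.integral_of_le zero_le_one]; exact hk1
          gcongr
      _ ≤ ε := by
          have hL : (0:ℝ) ≤ L := L.2
          rw [hηd]; field_simp; linarith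
  have b2 : |∫ t in (0:ℝ)..1, φ t * deriv w t| ≤
      (|φ 1| + |φ 0| + ∫ t in (0:ℝ)..1, |p.derivative.eval t|) * δ := by
    rw [hφac.integral_mul_deriv_eq_deriv_mul hwac]
    have b3 : |∫ t in (0:ℝ)..1, deriv φ t * w t| ≤ (∫ t in (0:ℝ)..1, |p.derivative.eval t|) * δ := by
      rw [← intervalIntegral.integral_mul_const]
      refine (intervalIntegral.abs_integral_le_integral_abs zero_le_one).trans ?_
      have ed : deriv φ = fun t => p.derivative.eval t := funext fun t => (hφd t).deriv
      rw [ed]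
      refine intervalIntegral.integral_mono_on zero_le_one ?_ ?_ ?_
      · exact ((hpc.mul hw.continuous).abs).intervalIntegrable _ _
      · exact (hpc.abs.mul continuous_const).intervalIntegrable _ _
      · intro t ht
        rw [abs_mul]
        exact mul_le_mul_of_nonneg_left (hwδ t ht) (abs_nonneg _)
    have a1 : |φ 1 * w 1| ≤ |φ 1| * δ := by
      rw [abs_mul]; exact mul_le_mul_of_nonneg_left (hwδ 1 (by simp)) (abs_nonneg _)
    have a0 : |φ 0 * w 0| ≤ |φ 0| * δ := by
      rw [abs_mul]; exact mul_le_mul_of_nonneg_left (hwδ 0 (by simp)) (abs_nonneg _)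
    calc _ ≤ |φ 1 * w 1| + |φ 0 * w 0| + |∫ t in (0:ℝ)..1, deriv φ t * w t| :=
          (abs_sub _ _).trans (add_le_add_left (abs_sub _ _) _)
      _ ≤ _ := by linarith
  rw [e, intervalIntegral.integral_add i2 i1]
  exact (abs_add_le _ _).trans (add_le_add b1 b2)

def ΦE (F : ℝ × ℝ → ℝ) : ℝ × ℝ → ℝ × ℝ → ℝ := fun p v => F p * enorm2 v
def ΦA : ℝ × ℝ → ℝ × ℝ → ℝ := fun p v => p.1 * v.2

lemma ΦE_cont {F : ℝ × ℝ → ℝ} (hF : Continuous F) : Continuous (Function.uncurry (ΦE F)) := by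
  have := en_cont
  unfold Function.uncurry ΦE; fun_prop

lemma ΦA_cont : Continuous (Function.uncurry ΦA) := by
  unfold Function.uncurry ΦA; fun_prop

lemma deriv_comp_ae {γ : ℝ → ℝ × ℝ} (h : LocallyLipschitz γ) :
    ∀ᵐ t, deriv (fun s => (γ s).1) t = (deriv γ t).1 ∧ deriv (fun s => (γ s).2) t = (deriv γ t).2 := by
  filter_upwards [ll_ae_diff h] with t ht
  exact ⟨((hasFDerivAt_fst (𝕜 := ℝ) (p := γ t)).comp_hasDerivAt t ht.hasDerivAt).deriv,
    ((hasFDerivAt_snd (𝕜 := ℝ) (p := γ t)).comp_hasDerivAt t ht.hasDerivAt).deriv⟩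

lemma lip_sub_fst {γ β : ℝ → ℝ × ℝ} {Λ : ℝ≥0} (hγ : LipschitzWith Λ γ) (hβ : LipschitzWith Λ β) :
    LipschitzWith (2 * Λ) (fun s => (γ s - β s).1) := by
  have := (LipschitzWith.prod_fst (α := ℝ) (β := ℝ)).comp (hγ.sub hβ)
  rw [one_mul, ← two_mul] at this
  exact this

lemma lip_sub_snd {γ β : ℝ → ℝ × ℝ} {Λ : ℝ≥0} (hγ : LipschitzWith Λ γ) (hβ : LipschitzWith Λ β) :
    LipschitzWith (2 * Λ) (fun s => (γ s - β s).2) := by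
  have := (LipschitzWith.prod_snd (α := ℝ) (β := ℝ)).comp (hγ.sub hβ)
  rw [one_mul, ← two_mul] at this
  exact this

lemma E_lsc {F : ℝ × ℝ → ℝ} (hF : Continuous F) (hF0 : ∀ p, 0 ≤ F p) {Λ : ℝ≥0} {γ : ℝ → ℝ × ℝ}
    (hγ : LipschitzWith Λ γ) {ε : ℝ} (hε : 0 < ε) :
    ∃ δ > 0, ∀ β : ℝ → ℝ × ℝ, LipschitzWith Λ β → (∀ t ∈ Icc (0:ℝ) 1, ‖γ t - β t‖ ≤ δ) →
      J (ΦE F) 0 1 γ ≤ J (ΦE F) 0 1 β + ε := by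
  have hll := hγ.locallyLipschitz
  set ξ : ℝ → ℝ × ℝ := fun t => (enorm2 (deriv γ t))⁻¹ • deriv γ t with hξ
  have hξm : Measurable ξ :=
    (en_cont.measurable.comp (measurable_deriv γ)).inv.smul (measurable_deriv γ)
  have hξ1 : ∀ t, enorm2 (ξ t) ≤ 1 := by
    intro t
    rcases (en_nonneg (deriv γ t)).eq_or_lt with h0 | h0
    · have h00 : ξ t = 0 := by simp [hξ, ← h0]
      rw [h00]; simp [enorm2]
    · simp only [hξ]; rw [en_smul _ (inv_pos.2 h0), inv_mul_cancel₀ h0.ne']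
  have hξ2 : ∀ t, (ξ t).1 * (deriv γ t).1 + (ξ t).2 * (deriv γ t).2 = enorm2 (deriv γ t) := by
    intro t
    rcases (en_nonneg (deriv γ t)).eq_or_lt with h0 | h0
    · simp [hξ, ← h0]
    · have := en_sq (deriv γ t)
      simp only [hξ, Prod.smul_fst, Prod.smul_snd, smul_eq_mul]
      field_simp
      linarith
  have hgi : ∀ η : ℝ → ℝ, Measurable η → (∀ t, |η t| ≤ 1) →
      IntervalIntegrable (fun t => F (γ t) * η t) volume 0 1 := by
    intro η hm h1
    have hFi : IntervalIntegrable (fun t => F (γ t)) volume 0 1 :=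
      (hF.comp hγ.continuous).intervalIntegrable 0 1
    refine hFi.norm.mono_fun' ?_ ?_
    · exact ((hF.comp hγ.continuous).measurable.mul hm).aestronglyMeasurable
    · refine Eventually.of_forall fun t => ?_
      change ‖_ * _‖ ≤ _
      rw [norm_mul]
      exact mul_le_of_le_one_right (norm_nonneg _) (h1 t)
  have hx1 : ∀ t, |(ξ t).1| ≤ 1 := fun t => (norm_fst_le (ξ t)).trans ((norm_le_en _).trans (hξ1 t))
  have hx2 : ∀ t, |(ξ t).2| ≤ 1 := fun t => (norm_snd_le (ξ t)).trans ((norm_le_en _).trans (hξ1 t))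
  obtain ⟨C1, hC1, w1⟩ := weak_conv (hgi _ hξm.fst hx1) (2 * Λ) (ε := ε / 8) (by positivity)
  obtain ⟨C2, hC2, w2⟩ := weak_conv (hgi _ hξm.snd hx2) (2 * Λ) (ε := ε / 8) (by positivity)
  -- uniform continuity
  have hcomp : IsCompact (Metric.cthickening 1 (γ '' Icc 0 1)) :=
    (isCompact_Icc.image hγ.continuous).cthickening
  have huc := hcomp.uniformContinuousOn_of_continuous hF.continuousOn
  rw [Metric.uniformContinuousOn_iff_le] at huc
  obtain ⟨δ0, hδ0, huc⟩ := huc (ε / (8 * (Λ + 1))) (by positivity)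
  have hΛ : (0:ℝ) ≤ Λ := Λ.2
  refine ⟨min (min 1 δ0) (ε / (8 * (C1 + C2 + 1))), by positivity, ?_⟩
  intro β hβ hclose
  set δ := min (min 1 δ0) (ε / (8 * (C1 + C2 + 1))) with hδ
  have hδp : 0 ≤ δ := by positivity
  have hδ1 : δ ≤ 1 := (min_le_left _ _).trans (min_le_left _ _)
  have hδ2 : δ ≤ δ0 := (min_le_left _ _).trans (min_le_right _ _)
  have hδ3 : (C1 + C2) * δ ≤ ε / 8 := by
    have : δ ≤ ε / (8 * (C1 + C2 + 1)) := min_le_right _ _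
    calc (C1 + C2) * δ ≤ (C1 + C2 + 1) * (ε / (8 * (C1 + C2 + 1))) := by
          apply mul_le_mul (by linarith) this hδp (by positivity)
      _ = ε / 8 := by field_simp
  have b1 := w1 _ (lip_sub_fst hγ hβ) δ hδp (fun t ht => (norm_fst_le (γ t - β t)).trans (hclose t ht))
  have b2 := w2 _ (lip_sub_snd hγ hβ) δ hδp (fun t ht => (norm_snd_le (γ t - β t)).trans (hclose t ht))
  have hFd : ∀ t ∈ Icc (0:ℝ) 1, |F (γ t) - F (β t)| ≤ ε / (8 * (Λ + 1)) := by
    intro t ht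
    have := huc (γ t) (Metric.self_subset_cthickening _ (mem_image_of_mem _ ht)) (β t)
      (Metric.mem_cthickening_of_dist_le (β t) (γ t) 1 _ (mem_image_of_mem _ ht) (by
        rw [dist_comm, dist_eq_norm]; exact (hclose t ht).trans hδ1))
      (by rw [dist_eq_norm]; exact (hclose t ht).trans hδ2)
    rwa [Real.dist_eq] at this
  have hi1 : IntervalIntegrable (fun t => F (γ t) * (ξ t).1 * deriv (fun s => (γ s - β s).1) t) volume 0 1 := by
    refine (hgi _ hξm.fst hx1).norm.mul_const (2 * Λ : ℝ) |>.mono_fun' ?_ ?_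
    · exact (((hF.comp hγ.continuous).measurable.mul hξm.fst).mul (measurable_deriv _)).aestronglyMeasurable
    · refine Eventually.of_forall fun t => ?_
      change ‖_ * _‖ ≤ _
      rw [norm_mul]
      exact mul_le_mul_of_nonneg_left (norm_deriv_le_of_lipschitz (lip_sub_fst hγ hβ)) (norm_nonneg _)
  have hi2 : IntervalIntegrable (fun t => F (γ t) * (ξ t).2 * deriv (fun s => (γ s - β s).2) t) volume 0 1 := by
    refine (hgi _ hξm.snd hx2).norm.mul_const (2 * Λ : ℝ) |>.mono_fun' ?_ ?_
    · exact (((hF.comp hγ.continuous).measurable.mul hξm.snd).mul (measurable_deriv _)).aestronglyMeasurable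
    · refine Eventually.of_forall fun t => ?_
      change ‖_ * _‖ ≤ _
      rw [norm_mul]
      exact mul_le_mul_of_nonneg_left (norm_deriv_le_of_lipschitz (lip_sub_snd hγ hβ)) (norm_nonneg _)
  have iγ := J_int (ΦE_cont hF) hγ.locallyLipschitz 0 1
  have iβ := J_int (ΦE_cont hF) hβ.locallyLipschitz 0 1
  have key : J (ΦE F) 0 1 γ ≤ ∫ t in (0:ℝ)..1, (((ΦE F (β t) (deriv β t) +
      F (γ t) * (ξ t).1 * deriv (fun s => (γ s - β s).1) t) +
      F (γ t) * (ξ t).2 * deriv (fun s => (γ s - β s).2) t) + ε / 4) := by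
    refine intervalIntegral.integral_mono_ae_restrict zero_le_one iγ
      (((iβ.add hi1).add hi2).add intervalIntegrable_const) ?_
    have hsub : LocallyLipschitz (fun s => γ s - β s) := (hγ.sub hβ).locallyLipschitz
    rw [EventuallyLE, ae_restrict_iff' measurableSet_Icc]
    filter_upwards [ll_ae_diff hγ.locallyLipschitz, ll_ae_diff hβ.locallyLipschitz,
      deriv_comp_ae hsub] with t ht1 ht2 ht3 ht
    have hd : deriv (fun s => γ s - β s) t = deriv γ t - deriv β t := deriv_sub ht1 ht2
    rw [ht3.1, ht3.2, hd]
    simp only [ΦE, Prod.fst_sub, Prod.snd_sub]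
    have c1 := en_cs (ξ t) (deriv β t)
    have hb : enorm2 (deriv β t) ≤ 2 * Λ := (en_le_norm _).trans (by
      have := norm_deriv_le_of_lipschitz (x₀ := t) hβ; linarith)
    have c2 : (ξ t).1 * (deriv β t).1 + (ξ t).2 * (deriv β t).2 ≤ enorm2 (deriv β t) := by
      have := mul_le_mul_of_nonneg_right (hξ1 t) (en_nonneg (deriv β t)); linarith
    have c4 := mul_le_mul_of_nonneg_left c2 (hF0 (γ t))
    have c5 : (F (γ t) - F (β t)) * enorm2 (deriv β t) ≤ ε / 4 := by
      calc _ ≤ (ε / (8 * (Λ + 1))) * (2 * Λ) := by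
            refine mul_le_mul ((le_abs_self _).trans (hFd t ht)) hb (en_nonneg _) (by positivity)
        _ ≤ ε / 4 := by field_simp; linarith
    have e1 : F (γ t) * enorm2 (deriv γ t) =
      F (γ t) * ((ξ t).1 * (deriv γ t).1 + (ξ t).2 * (deriv γ t).2) := by rw [hξ2]
    rw [e1]
    linarith
  rw [intervalIntegral.integral_add ((iβ.add hi1).add hi2) intervalIntegrable_const,
    intervalIntegral.integral_add (iβ.add hi1) hi2, intervalIntegral.integral_add iβ hi1] at key
  have k1 := (le_abs_self _).trans b1
  have k2 := (le_abs_self _).trans b2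
  simp only [intervalIntegral.integral_const, sub_zero, one_smul] at key
  have : J (ΦE F) 0 1 β = ∫ t in (0:ℝ)..1, ΦE F (β t) (deriv β t) := rfl
  rw [this]
  nlinarith

lemma A_cont {Λ : ℝ≥0} {γ : ℝ → ℝ × ℝ}
    (hγ : LipschitzWith Λ γ) {ε : ℝ} (hε : 0 < ε) :
    ∃ δ > 0, ∀ β : ℝ → ℝ × ℝ, LipschitzWith Λ β → (∀ t ∈ Icc (0:ℝ) 1, ‖γ t - β t‖ ≤ δ) →
      |J ΦA 0 1 γ - J ΦA 0 1 β| ≤ ε := by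
  have hg : Continuous (fun t => (γ t).1) := hγ.continuous.fst
  obtain ⟨C, hC, w⟩ := weak_conv (hg.intervalIntegrable 0 1) (2 * Λ) (ε := ε / 2) (by positivity)
  have hΛ : (0:ℝ) ≤ Λ := Λ.2
  refine ⟨ε / (2 * (C + Λ + 1)), by positivity, ?_⟩
  intro β hβ hclose
  set δ := ε / (2 * (C + Λ + 1)) with hδ
  have hδp : 0 ≤ δ := by positivity
  have b2 := w _ (lip_sub_snd hγ hβ) δ hδp (fun t ht => (norm_snd_le (γ t - β t)).trans (hclose t ht))
  have iγ := J_int ΦA_cont hγ.locallyLipschitz 0 1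
  have iβ := J_int ΦA_cont hβ.locallyLipschitz 0 1
  have hdi : IntervalIntegrable (fun t => deriv (fun s => (γ s - β s).2) t) volume 0 1 :=
    ((lip_sub_snd hγ hβ).lipschitzOnWith (s := uIcc 0 1)).absolutelyContinuousOnInterval.intervalIntegrable_deriv
  have i1 : IntervalIntegrable (fun t => (γ t).1 * deriv (fun s => (γ s - β s).2) t) volume 0 1 :=
    hdi.continuousOn_mul hg.continuousOn
  have hΨ : Continuous (Function.uncurry (fun _ v : ℝ × ℝ => v.2)) := by
    unfold Function.uncurry; fun_prop
  have i2 : IntervalIntegrable (fun t => (γ t - β t).1 * (deriv β t).2) volume 0 1 :=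
    (J_int hΨ hβ.locallyLipschitz 0 1).continuousOn_mul (hγ.continuous.sub hβ.continuous).fst.continuousOn
  have e : J ΦA 0 1 γ - J ΦA 0 1 β = (∫ t in (0:ℝ)..1, (γ t).1 * deriv (fun s => (γ s - β s).2) t) +
      ∫ t in (0:ℝ)..1, (γ t - β t).1 * (deriv β t).2 := by
    unfold J
    rw [← intervalIntegral.integral_sub iγ iβ, ← intervalIntegral.integral_add i1 i2]
    apply intervalIntegral.integral_congr_ae
    have hsub : LocallyLipschitz (fun s => γ s - β s) := (hγ.sub hβ).locallyLipschitz
    filter_upwards [ll_ae_diff hγ.locallyLipschitz, ll_ae_diff hβ.locallyLipschitz,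
      deriv_comp_ae hsub] with t ht1 ht2 ht3 ht
    have hd : deriv (fun s => γ s - β s) t = deriv γ t - deriv β t := deriv_sub ht1 ht2
    rw [ht3.2, hd]
    simp only [ΦA, Prod.fst_sub, Prod.snd_sub]
    ring
  have b3 : |∫ t in (0:ℝ)..1, (γ t - β t).1 * (deriv β t).2| ≤ δ * Λ := by
    have := intervalIntegral.norm_integral_le_of_norm_le_const (a := 0) (b := 1) (C := δ * Λ)
      (f := fun t => (γ t - β t).1 * (deriv β t).2) ?_
    · simpa using this
    · intro t ht
      rw [uIoc_of_le zero_le_one] at ht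
      rw [norm_mul]
      refine mul_le_mul ((norm_fst_le _).trans (hclose t ⟨ht.1.le, ht.2⟩))
        ((norm_snd_le _).trans (norm_deriv_le_of_lipschitz hβ)) (norm_nonneg _) hδp
  rw [e]
  refine (abs_add_le _ _).trans ((add_le_add b2 b3).trans ?_)
  have : (C + Λ) * δ ≤ ε / 2 := by
    rw [hδ]; field_simp; linarith
  linarith

def Gf (F : ℝ × ℝ → ℝ) (κ A a b : ℝ) (γ : ℝ → ℝ × ℝ) : ℝ :=
  J (ΦE F) a b γ + κ * |J ΦA a b γ - A|

def KC (Λ : ℝ≥0) (pm pp : ℝ × ℝ) (γ : ℝ → ℝ × ℝ) : Prop :=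
  LipschitzWith Λ γ ∧ γ 0 = pm ∧ γ 1 = pp

lemma exists_min_K {F : ℝ × ℝ → ℝ} (hF : Continuous F) (hF0 : ∀ p, 0 ≤ F p) {κ : ℝ} (hκ : 0 ≤ κ)
    (A : ℝ) (Λ : ℝ≥0) (pm pp : ℝ × ℝ) (hne : ∃ γ, KC Λ pm pp γ) :
    ∃ γ, KC Λ pm pp γ ∧ ∀ β, KC Λ pm pp β → Gf F κ A 0 1 γ ≤ Gf F κ A 0 1 β := by
  let I := Icc (0:ℝ) 1
  let z0 : I := ⟨0, by simp [I]⟩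
  let z1 : I := ⟨1, by simp [I]⟩
  let S : Set (BoundedContinuousFunction I (ℝ × ℝ)) :=
    {f | (∀ x y, dist (f x) (f y) ≤ Λ * dist x y) ∧ f z0 = pm ∧ f z1 = pp}
  have ev : ∀ x : I, Continuous (fun f : BoundedContinuousFunction I (ℝ × ℝ) => f x) :=
    fun x => (BoundedContinuousFunction.lipschitz_eval_const x).continuous
  have hSc : IsClosed S := by
    refine IsClosed.and ?_ (IsClosed.and ?_ ?_)
    · simp only [Set.ofPred_forall]
      refine isClosed_iInter fun x => isClosed_iInter fun y => ?_
      exact isClosed_le ((ev x).dist (ev y)) continuous_const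
    · exact isClosed_eq (ev z0) continuous_const
    · exact isClosed_eq (ev z1) continuous_const
  have hScomp : IsCompact S := by
    refine BoundedContinuousFunction.arzela_ascoli₂ (Metric.closedBall pm Λ)
      (isCompact_closedBall _ _) S hSc ?_ ?_
    · intro f x hf
      have h1 := hf.1 x z0
      rw [hf.2.1] at h1
      refine h1.trans ?_
      have : dist x z0 ≤ 1 := by
        rw [Subtype.dist_eq, Real.dist_eq]
        simp only [z0, sub_zero]
        rw [abs_of_nonneg x.2.1]; exact x.2.2
      exact mul_le_of_le_one_right Λ.2 this
    · refine Metric.equicontinuous_of_continuity_modulus (fun x => Λ * x) ?_ _ ?_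
      · exact Continuous.tendsto' (by fun_prop) _ _ (by simp)
      · intro x y f
        exact f.2.1 x y
  let ex : BoundedContinuousFunction I (ℝ × ℝ) → ℝ → ℝ × ℝ := fun f => IccExtend zero_le_one f
  have hex : ∀ f ∈ S, KC Λ pm pp (ex f) := by
    intro f hf
    refine ⟨?_, ?_, ?_⟩
    · have h1 : LipschitzWith Λ f := LipschitzWith.of_dist_le_mul hf.1
      have := h1.comp (LipschitzWith.projIcc (zero_le_one (α := ℝ)))
      rwa [mul_one] at this
    · have : ex f 0 = f z0 := IccExtend_left _ _
      rw [this, hf.2.1]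
    · have : ex f 1 = f z1 := IccExtend_right _ _
      rw [this, hf.2.2]
  have hexd : ∀ f g t, t ∈ Icc (0:ℝ) 1 → ‖ex f t - ex g t‖ ≤ dist f g := by
    intro f g t ht
    rw [← dist_eq_norm]
    simp only [ex, IccExtend_of_mem _ _ ht]
    exact BoundedContinuousFunction.dist_coe_le_dist _
  have hres : ∀ β, KC Λ pm pp β → ∃ f ∈ S, Gf F κ A 0 1 (ex f) = Gf F κ A 0 1 β := by
    intro β hβ
    let f : BoundedContinuousFunction I (ℝ × ℝ) :=
      BoundedContinuousFunction.mkOfCompact ⟨fun x : I => β x, hβ.1.continuous.comp continuous_subtype_val⟩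
    refine ⟨f, ⟨fun x y => hβ.1.dist_le_mul x y, hβ.2.1, hβ.2.2⟩, ?_⟩
    have heq : EqOn (ex f) β (Ioo 0 1) := by
      intro t ht
      simp only [ex, IccExtend_of_mem _ _ (Ioo_subset_Icc_self ht)]
      rfl
    unfold Gf
    rw [J_congr zero_le_one heq, J_congr zero_le_one heq]
  have hlsc : LowerSemicontinuousOn (fun f => Gf F κ A 0 1 (ex f)) S := by
    intro f hf y hy
    set d := (Gf F κ A 0 1 (ex f) - y) / (2 * (κ + 1)) with hd
    have hdp : 0 < d := div_pos (sub_pos.2 hy) (by positivity)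
    obtain ⟨δ1, hδ1, h1⟩ := E_lsc hF hF0 (hex f hf).1 hdp
    obtain ⟨δ2, hδ2, h2⟩ := A_cont (hex f hf).1 hdp
    have : Metric.ball f (min δ1 δ2) ∈ 𝓝[S] f :=
      mem_nhdsWithin_of_mem_nhds (Metric.ball_mem_nhds _ (by positivity))
    filter_upwards [this, self_mem_nhdsWithin] with g hg hgS
    rw [Metric.mem_ball, dist_comm] at hg
    have k1 := h1 _ (hex g hgS).1 (fun t ht => (hexd f g t ht).trans (hg.le.trans (min_le_left _ _)))
    have k2 := h2 _ (hex g hgS).1 (fun t ht => (hexd f g t ht).trans (hg.le.trans (min_le_right _ _)))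
    have k3 : |J ΦA 0 1 (ex f) - A| ≤ |J ΦA 0 1 (ex g) - A| + d := by
      have := abs_add_le (J ΦA 0 1 (ex f) - J ΦA 0 1 (ex g)) (J ΦA 0 1 (ex g) - A)
      rw [sub_add_sub_cancel] at this
      linarith
    have k4 := mul_le_mul_of_nonneg_left k3 hκ
    have k5 : d * (2 * (κ + 1)) = Gf F κ A 0 1 (ex f) - y := by
      rw [hd]; field_simp
    have k6 : 0 ≤ d * κ := mul_nonneg hdp.le hκ
    have e1 : Gf F κ A 0 1 (ex f) = J (ΦE F) 0 1 (ex f) + κ * |J ΦA 0 1 (ex f) - A| := rfl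
    have e2 : Gf F κ A 0 1 (ex g) = J (ΦE F) 0 1 (ex g) + κ * |J ΦA 0 1 (ex g) - A| := rfl
    change y < Gf F κ A 0 1 (ex g)
    rw [mul_add] at k4
    nlinarith
  obtain ⟨γ, hγ⟩ := hne
  obtain ⟨f0, hf0, -⟩ := hres γ hγ
  obtain ⟨f, hf, hmin⟩ := LowerSemicontinuousOn.exists_isMinOn ⟨f0, hf0⟩ hScomp hlsc
  refine ⟨ex f, hex f hf, fun β hβ => ?_⟩
  obtain ⟨g, hg, e⟩ := hres β hβ
  rw [← e]
  exact hmin hg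

lemma well_lower {W : ℝ × ℝ → ℝ} (hs : ContDiff ℝ (⊤ : ℕ∞) W) {p0 : ℝ × ℝ}
    (h0 : W p0 = 0) (hd : fderiv ℝ W p0 = 0)
    (hh : ∀ v : ℝ × ℝ, v ≠ 0 → 0 < iteratedFDeriv ℝ 2 W p0 ![v, v]) :
    ∃ r > 0, ∃ c > 0, ∀ v : ℝ × ℝ, ‖v‖ < r → c * ‖v‖ ^ 2 ≤ W (p0 + v) := by
  have hWd : Differentiable ℝ W := hs.differentiable (by simp)
  have hD1 : ContDiff ℝ 1 (fderiv ℝ W) := (contDiff_infty_iff_fderiv.1 hs).2.of_le (by simp)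
  set L := fderiv ℝ (fderiv ℝ W) p0 with hL
  have hLd : HasFDerivAt (fderiv ℝ W) L p0 := (hD1.differentiable one_ne_zero p0).hasFDerivAt
  have hpos : ∀ v : ℝ × ℝ, v ≠ 0 → 0 < L v v := by
    intro v hv
    have := hh v hv
    rw [iteratedFDeriv_two_apply] at this
    simpa using this
  obtain ⟨q, hq, hqL⟩ : ∃ q > 0, ∀ v : ℝ × ℝ, 2 * q * ‖v‖ ^ 2 ≤ L v v := by
    have hne : (Metric.sphere (0 : ℝ × ℝ) 1).Nonempty := NormedSpace.sphere_nonempty.2 zero_le_one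
    have hcont : Continuous (fun v : ℝ × ℝ => L v v) := by fun_prop
    obtain ⟨v0, hv0, hm⟩ := (isCompact_sphere (0 : ℝ × ℝ) 1).exists_isMinOn hne hcont.continuousOn
    have hv00 : v0 ≠ 0 := by
      rintro rfl; simp at hv0
    refine ⟨L v0 v0 / 2, half_pos (hpos v0 hv00), fun v => ?_⟩
    by_cases hv : v = 0
    · subst hv; simp
    · have hn : 0 < ‖v‖ := norm_pos_iff.2 hv
      have h1 : ‖v‖⁻¹ • v ∈ Metric.sphere (0 : ℝ × ℝ) 1 := by
        simp [norm_smul, hn.ne']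
      have h2 : L v0 v0 ≤ L (‖v‖⁻¹ • v) (‖v‖⁻¹ • v) := hm h1
      simp only [map_smul, smul_apply, smul_eq_mul] at h2
      have h3 := mul_le_mul_of_nonneg_right h2 (sq_nonneg ‖v‖)
      have h4 : ‖v‖⁻¹ * (‖v‖⁻¹ * L v v) * ‖v‖ ^ 2 = L v v := by field_simp
      linarith
  have ho := hLd.isLittleO
  rw [Asymptotics.isLittleO_iff] at ho
  have ho := ho hq
  rw [Metric.eventually_nhds_iff] at ho
  obtain ⟨r, hr, ho⟩ := ho
  refine ⟨r, hr, q / 2, by positivity, fun v hv => ?_⟩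
  have key : ∀ s ∈ Icc (0:ℝ) 1, q * s * ‖v‖ ^ 2 ≤ fderiv ℝ W (p0 + s • v) v := by
    intro s hs
    have h1 := @ho (p0 + s • v) (by
      rw [dist_eq_norm, add_sub_cancel_left, norm_smul, Real.norm_of_nonneg hs.1]
      exact (mul_le_of_le_one_left (norm_nonneg _) hs.2).trans_lt hv)
    rw [hd, sub_zero, add_sub_cancel_left, norm_smul, Real.norm_of_nonneg hs.1] at h1
    have h2 := (ContinuousLinearMap.le_opNorm (fderiv ℝ W (p0 + s • v) - L (s • v)) v)
    have h3 := h2.trans (mul_le_mul_of_nonneg_right h1 (norm_nonneg v))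
    rw [sub_apply, map_smul, smul_apply, smul_eq_mul, Real.norm_eq_abs] at h3
    have h4 := (abs_le.1 h3).1
    have h5 := mul_le_mul_of_nonneg_left (hqL v) hs.1
    nlinarith
  have hg : ∀ s : ℝ, HasDerivAt (fun s : ℝ => W (p0 + s • v) - q * s ^ 2 / 2 * ‖v‖ ^ 2)
      (fderiv ℝ W (p0 + s • v) v - q * s * ‖v‖ ^ 2) s := by
    intro s
    have h1 : HasDerivAt (fun s : ℝ => p0 + s • v) v s := by
      simpa using ((hasDerivAt_id s).smul_const v).const_add p0
    have h2 := (hWd (p0 + s • v)).hasFDerivAt.comp_hasDerivAt s h1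
    have h3 : HasDerivAt (fun s : ℝ => q * s ^ 2 / 2 * ‖v‖ ^ 2) (q * s * ‖v‖ ^ 2) s := by
      have := (((hasDerivAt_pow 2 s).const_mul q).div_const 2).mul_const (‖v‖ ^ 2)
      refine this.congr_deriv ?_
      have e : s ^ (2 - 1) = s := by norm_num
      rw [e]; push_cast; ring
    exact h2.sub h3
  have hmono : MonotoneOn (fun s : ℝ => W (p0 + s • v) - q * s ^ 2 / 2 * ‖v‖ ^ 2) (Icc 0 1) := by
    refine monotoneOn_of_deriv_nonneg (convex_Icc 0 1) (fun s _ => (hg s).continuousAt.continuousWithinAt)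
      (fun s _ => (hg s).differentiableAt.differentiableWithinAt) ?_
    intro s hs
    rw [(hg s).deriv]
    have := key s (interior_subset hs)
    linarith
  have := hmono (left_mem_Icc.2 zero_le_one) (right_mem_Icc.2 zero_le_one) zero_le_one
  simp [h0] at this
  linarith

lemma W_facts {W : ℝ × ℝ → ℝ} {pm pp : ℝ × ℝ} (hW : TwoWell W pm pp) (R : ℝ) (hm : ‖pm‖ ≤ R) (hp : ‖pp‖ ≤ R) :
    ∃ C > 0, ∃ c > 0,
      (∀ p v : ℝ × ℝ, ‖p‖ ≤ R → ‖p + v‖ ≤ R → |W (p + v) - W p - fderiv ℝ W p v| ≤ C * ‖v‖ ^ 2) ∧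
      (∀ p : ℝ × ℝ, ‖p‖ ≤ R → ‖fderiv ℝ W p‖ ≤ C * (‖p - pm‖ * ‖p - pp‖)) ∧
      (∀ p : ℝ × ℝ, ‖p‖ ≤ R → c * (‖p - pm‖ * ‖p - pp‖) ^ 2 ≤ W p) ∧
      (∀ p : ℝ × ℝ, ‖p‖ ≤ R → W p ≤ C * ‖p - pm‖ ^ 2) ∧
      (∀ p : ℝ × ℝ, ‖p‖ ≤ R → W p ≤ C * ‖p - pp‖ ^ 2) := by
  have hs := hW.smooth
  have hWd : Differentiable ℝ W := hs.differentiable (by simp)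
  have hD1 : ContDiff ℝ 1 (fderiv ℝ W) := (contDiff_infty_iff_fderiv.1 hs).2.of_le (by simp)
  have hm0 : W pm = 0 := (hW.zeroSet pm).2 (Or.inl rfl)
  have hp0 : W pp = 0 := (hW.zeroSet pp).2 (Or.inr rfl)
  have hdm : fderiv ℝ W pm = 0 := IsLocalMin.fderiv_eq_zero
    (Eventually.of_forall fun p => by rw [hm0]; exact hW.nonneg p)
  have hdp : fderiv ℝ W pp = 0 := IsLocalMin.fderiv_eq_zero
    (Eventually.of_forall fun p => by rw [hp0]; exact hW.nonneg p)
  obtain ⟨K, hK⟩ : ∃ K : ℝ≥0, LipschitzOnWith K (fderiv ℝ W) (Metric.closedBall 0 R) :=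
    LocallyLipschitzOn.exists_lipschitzOnWith_of_compact (isCompact_closedBall _ _)
      (hD1.locallyLipschitz.locallyLipschitzOn)
  have hKn : ∀ p v : ℝ × ℝ, ‖p‖ ≤ R → ‖v‖ ≤ R → ‖fderiv ℝ W p - fderiv ℝ W v‖ ≤ K * ‖p - v‖ := by
    intro p v hp hv
    have := hK.dist_le_mul p (by simpa using hp) v (by simpa using hv)
    rwa [dist_eq_norm, dist_eq_norm] at this
  have hT : ∀ p v : ℝ × ℝ, ‖p‖ ≤ R → ‖p + v‖ ≤ R → |W (p + v) - W p - fderiv ℝ W p v| ≤ K * ‖v‖ ^ 2 := by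
    intro p v hp hv
    have hcv : segment ℝ p (p + v) ⊆ Metric.closedBall 0 R :=
      (convex_closedBall 0 R).segment_subset (by simpa using hp) (by simpa using hv)
    have := Convex.norm_image_sub_le_of_norm_fderiv_le' (f := W) (φ := fderiv ℝ W p)
      (s := segment ℝ p (p + v)) (C := K * ‖v‖) (fun x _ => hWd x) ?_ (convex_segment p (p + v))
      (left_mem_segment ℝ p (p + v)) (right_mem_segment ℝ p (p + v))
    · rw [add_sub_cancel_left] at this
      rw [Real.norm_eq_abs] at this
      linarith [this, sq ‖v‖]
    · intro x hx
      have h1 := hKn x p (by simpa using hcv hx) hp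
      refine h1.trans (mul_le_mul_of_nonneg_left ?_ K.2)
      rw [segment_eq_image'] at hx
      obtain ⟨θ, hθ, rfl⟩ := hx
      simp only [add_sub_cancel_left, norm_smul, Real.norm_of_nonneg hθ.1]
      exact mul_le_of_le_one_left (norm_nonneg _) hθ.2
  set d := ‖pp - pm‖ with hdd
  have hd : 0 < d := norm_pos_iff.2 (sub_ne_zero.2 hW.wells_ne.symm)
  have htri : ∀ p, d ≤ ‖p - pm‖ + ‖p - pp‖ := by
    intro p
    have := norm_sub_le (p - pm) (p - pp)
    rwa [sub_sub_sub_cancel_left] at this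
  obtain ⟨r1, hr1, c1, hc1, h1⟩ := well_lower hs hm0 hdm hW.hess_m
  obtain ⟨r2, hr2, c2, hc2, h2⟩ := well_lower hs hp0 hdp hW.hess_p
  have hWc : Continuous W := hs.continuous
  have hcomp : IsCompact (Metric.closedBall (0 : ℝ × ℝ) R ∩ {p | r1 ≤ ‖p - pm‖ ∧ r2 ≤ ‖p - pp‖}) := by
    refine (isCompact_closedBall _ _).inter_right (IsClosed.and ?_ ?_)
    · exact isClosed_le continuous_const (by fun_prop)
    · exact isClosed_le continuous_const (by fun_prop)
  obtain ⟨m, hmpos, hmle⟩ : ∃ m > 0, ∀ p : ℝ × ℝ, ‖p‖ ≤ R → r1 ≤ ‖p - pm‖ → r2 ≤ ‖p - pp‖ → m ≤ W p := by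
    rcases (Metric.closedBall (0 : ℝ × ℝ) R ∩ {p | r1 ≤ ‖p - pm‖ ∧ r2 ≤ ‖p - pp‖}).eq_empty_or_nonempty with he | hne
    · refine ⟨1, one_pos, fun p a b c => ?_⟩
      have : p ∈ (∅ : Set (ℝ × ℝ)) := by rw [← he]; exact ⟨by simpa using a, b, c⟩
      exact this.elim
    · obtain ⟨p0, hp0', hmin⟩ := hcomp.exists_isMinOn hne hWc.continuousOn
      refine ⟨W p0, ?_, fun p a b c => hmin ⟨by simpa using a, b, c⟩⟩
      refine lt_of_le_of_ne (hW.nonneg p0) fun h => ?_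
      rcases (hW.zeroSet p0).1 h.symm with rfl | rfl
      · have := hp0'.2.1; simp at this; linarith
      · have := hp0'.2.2; simp at this; linarith
  have hR : 0 ≤ R := (norm_nonneg _).trans hm
  have hbm : ∀ p : ℝ × ℝ, ‖p‖ ≤ R → ‖p - pm‖ ≤ 2 * R := fun p h => (norm_sub_le _ _).trans (by linarith)
  have hbp : ∀ p : ℝ × ℝ, ‖p‖ ≤ R → ‖p - pp‖ ≤ 2 * R := fun p h => (norm_sub_le _ _).trans (by linarith)
  have hRp : 0 < R := by
    have := hbm pp hp
    rw [← hdd] at this; linarith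
  have hKn0 : (0:ℝ) ≤ K := K.2
  refine ⟨K * (1 + 2 / d) + 1, by positivity, min (m / (2 * R * (2 * R)) ^ 2) (min (c1 / (2 * R) ^ 2) (c2 / (2 * R) ^ 2)), by positivity, ?_, ?_, ?_, ?_, ?_⟩
  · intro p v a b
    refine (hT p v a b).trans (mul_le_mul_of_nonneg_right ?_ (sq_nonneg _))
    have : 0 ≤ K * (2 / d) := by positivity
    linarith
  · intro p a
    have e1 := hKn p pm a hm
    have e2 := hKn p pp a hp
    rw [hdm, sub_zero] at e1
    rw [hdp, sub_zero] at e2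
    have e3 : ‖fderiv ℝ W p‖ * d ≤ 2 * K * (‖p - pm‖ * ‖p - pp‖) := by
      have := mul_le_mul_of_nonneg_left (htri p) (norm_nonneg (fderiv ℝ W p))
      have f1 := mul_le_mul_of_nonneg_right e1 (norm_nonneg (p - pp))
      have f2 := mul_le_mul_of_nonneg_right e2 (norm_nonneg (p - pm))
      nlinarith
    have e4 : ‖fderiv ℝ W p‖ ≤ 2 * K * (‖p - pm‖ * ‖p - pp‖) / d := by
      rw [le_div_iff₀ hd]; exact e3
    refine e4.trans ?_
    have : 2 * K * (‖p - pm‖ * ‖p - pp‖) / d = (K * (2 / d)) * (‖p - pm‖ * ‖p - pp‖) := by ring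
    rw [this]
    refine mul_le_mul_of_nonneg_right ?_ (by positivity)
    linarith
  · intro p a
    set x := ‖p - pm‖ with hx
    set y := ‖p - pp‖ with hy
    have hx0 : 0 ≤ x := norm_nonneg _
    have hy0 : 0 ≤ y := norm_nonneg _
    have hxR := hbm p a
    have hyR := hbp p a
    rw [← hx] at hxR
    rw [← hy] at hyR
    by_cases hx1 : x < r1
    · have := h1 (p - pm) hx1
      rw [add_sub_cancel, ← hx] at this
      refine le_trans ?_ this
      calc _ ≤ c1 / (2 * R) ^ 2 * (x * y) ^ 2 :=
            mul_le_mul_of_nonneg_right ((min_le_right _ _).trans (min_le_left _ _)) (sq_nonneg _)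
        _ ≤ c1 / (2 * R) ^ 2 * (x * (2 * R)) ^ 2 := by gcongr
        _ = c1 * x ^ 2 := by field_simp
    by_cases hy1 : y < r2
    · have := h2 (p - pp) hy1
      rw [add_sub_cancel, ← hy] at this
      refine le_trans ?_ this
      calc _ ≤ c2 / (2 * R) ^ 2 * (x * y) ^ 2 :=
            mul_le_mul_of_nonneg_right ((min_le_right _ _).trans (min_le_right _ _)) (sq_nonneg _)
        _ ≤ c2 / (2 * R) ^ 2 * ((2 * R) * y) ^ 2 := by gcongr
        _ = c2 * y ^ 2 := by field_simp
    refine le_trans ?_ (hmle p a (not_lt.1 hx1) (not_lt.1 hy1))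
    calc _ ≤ m / (2 * R * (2 * R)) ^ 2 * (x * y) ^ 2 :=
          mul_le_mul_of_nonneg_right (min_le_left _ _) (sq_nonneg _)
      _ ≤ m / (2 * R * (2 * R)) ^ 2 * (2 * R * (2 * R)) ^ 2 := by gcongr
      _ = m := by field_simp
  · intro p a
    have := hT pm (p - pm) hm (by rwa [add_sub_cancel])
    rw [add_sub_cancel, hm0, hdm] at this
    simp only [sub_zero, zero_apply] at this
    refine ((le_abs_self _).trans this).trans (mul_le_mul_of_nonneg_right ?_ (sq_nonneg _))
    have : 0 ≤ K * (2 / d) := by positivity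
    linarith
  · intro p a
    have := hT pp (p - pp) hp (by rwa [add_sub_cancel])
    rw [add_sub_cancel, hp0, hdp] at this
    simp only [sub_zero, zero_apply] at this
    refine ((le_abs_self _).trans this).trans (mul_le_mul_of_nonneg_right ?_ (sq_nonneg _))
    have : 0 ≤ K * (2 / d) := by positivity
    linarith

/-- Local bounds for `F` on a ball containing the wells. -/
structure FB (F : ℝ × ℝ → ℝ) (pm pp : ℝ × ℝ) (R C c : ℝ) : Prop where
  cont : Continuous F
  nn : ∀ p, 0 ≤ F p
  hm : ‖pm‖ ≤ R
  hp : ‖pp‖ ≤ R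
  Cpos : 0 < C
  cpos : 0 < c
  ne : pm ≠ pp
  up_m : ∀ p : ℝ × ℝ, ‖p‖ ≤ R → F p ≤ C * ‖p - pm‖
  up_p : ∀ p : ℝ × ℝ, ‖p‖ ≤ R → F p ≤ C * ‖p - pp‖
  lo : ∀ p : ℝ × ℝ, ‖p‖ ≤ R → c * (‖p - pm‖ * ‖p - pp‖) ≤ F p

lemma ΦE_nn {F : ℝ × ℝ → ℝ} (h : ∀ p, 0 ≤ F p) (p v : ℝ × ℝ) : 0 ≤ ΦE F p v :=
  mul_nonneg (h p) (en_nonneg v)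

lemma JE_nn {F : ℝ × ℝ → ℝ} (h : ∀ p, 0 ≤ F p) {a b : ℝ} (hab : a ≤ b) (γ : ℝ → ℝ × ℝ) :
    0 ≤ J (ΦE F) a b γ :=
  intervalIntegral.integral_nonneg hab fun _ _ => ΦE_nn h _ _

lemma JE_sub {F : ℝ × ℝ → ℝ} (hc : Continuous F) (h : ∀ p, 0 ≤ F p) {a b s t : ℝ} {γ : ℝ → ℝ × ℝ}
    (hγ : LocallyLipschitz γ) (h1 : a ≤ s) (_ : s ≤ t) (h3 : t ≤ b) :
    J (ΦE F) s t γ ≤ J (ΦE F) a b γ := by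
  have e1 := J_add (ΦE_cont hc) hγ a s b
  have e2 := J_add (ΦE_cont hc) hγ s t b
  have := JE_nn h h1 γ
  have := JE_nn h h3 γ
  linarith

/-- Minimal-norm dual vector. -/
def Lq (q : ℝ × ℝ) : ℝ × ℝ →L[ℝ] ℝ :=
  (1 / (q.1 ^ 2 + q.2 ^ 2)) • (q.1 • ContinuousLinearMap.fst ℝ ℝ ℝ + q.2 • ContinuousLinearMap.snd ℝ ℝ ℝ)

lemma Lq_apply (q v : ℝ × ℝ) : Lq q v = (q.1 * v.1 + q.2 * v.2) / (q.1 ^ 2 + q.2 ^ 2) := by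
  simp [Lq]; ring

lemma q_pos {q : ℝ × ℝ} (hq : q ≠ 0) : 0 < q.1 ^ 2 + q.2 ^ 2 := by
  by_contra h
  apply hq
  have h1 : q.1 = 0 := by nlinarith [sq_nonneg q.1, sq_nonneg q.2]
  have h2 : q.2 = 0 := by nlinarith [sq_nonneg q.1, sq_nonneg q.2]
  exact Prod.ext h1 h2

lemma Lq_self {q : ℝ × ℝ} (hq : q ≠ 0) : Lq q q = 1 := by
  rw [Lq_apply]
  have := q_pos hq
  rw [div_eq_one_iff_eq this.ne']; ring

lemma form_bound {F : ℝ × ℝ → ℝ} {pm pp : ℝ × ℝ} {R C c : ℝ} (h : FB F pm pp R C c)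
    {Ω : ℝ × ℝ → (ℝ × ℝ →L[ℝ] ℝ)} (hΩ : ContDiff ℝ 1 Ω) (h1 : Ω pm = 0) (h2 : Ω pp = 0) :
    ∃ C0 > 0, ∀ p v : ℝ × ℝ, ‖p‖ ≤ R → |Ω p v| ≤ C0 * ΦE F p v := by
  obtain ⟨K, hK⟩ : ∃ K : ℝ≥0, LipschitzOnWith K Ω (Metric.closedBall 0 R) :=
    LocallyLipschitzOn.exists_lipschitzOnWith_of_compact (isCompact_closedBall _ _)
      (hΩ.locallyLipschitz.locallyLipschitzOn)
  have hKn : ∀ p v : ℝ × ℝ, ‖p‖ ≤ R → ‖v‖ ≤ R → ‖Ω p - Ω v‖ ≤ K * ‖p - v‖ := by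
    intro p v hp hv
    have := hK.dist_le_mul p (by simpa using hp) v (by simpa using hv)
    rwa [dist_eq_norm, dist_eq_norm] at this
  set d := ‖pp - pm‖ with hdd
  have hd : 0 < d := norm_pos_iff.2 (sub_ne_zero.2 h.ne.symm)
  have htri : ∀ p, d ≤ ‖p - pm‖ + ‖p - pp‖ := by
    intro p
    have := norm_sub_le (p - pm) (p - pp)
    rwa [sub_sub_sub_cancel_left] at this
  have hK0 : (0:ℝ) ≤ K := K.2
  have hc := h.cpos
  refine ⟨2 * (K + 1) / (d * c), by positivity, fun p v hp => ?_⟩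
  have e1 := hKn p pm hp h.hm
  have e2 := hKn p pp hp h.hp
  rw [h1, sub_zero] at e1
  rw [h2, sub_zero] at e2
  have e3 : ‖Ω p‖ * d ≤ 2 * (K + 1) * (‖p - pm‖ * ‖p - pp‖) := by
    have := mul_le_mul_of_nonneg_left (htri p) (norm_nonneg (Ω p))
    have f1 := mul_le_mul_of_nonneg_right e1 (norm_nonneg (p - pp))
    have f2 := mul_le_mul_of_nonneg_right e2 (norm_nonneg (p - pm))
    have f3 : 0 ≤ ‖p - pm‖ * ‖p - pp‖ := by positivity
    nlinarith
  have e4 : ‖Ω p‖ * (d * c) ≤ 2 * (K + 1) * F p := by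
    have := mul_le_mul_of_nonneg_left (h.lo p hp) (show (0:ℝ) ≤ 2 * (K + 1) by positivity)
    have := mul_le_mul_of_nonneg_right e3 hc.le
    linarith
  have e5 : ‖Ω p‖ ≤ 2 * (K + 1) / (d * c) * F p := by
    rw [div_mul_eq_mul_div, le_div_iff₀ (by positivity)]; exact e4
  have hn : 0 ≤ 2 * (K + 1) / (d * c) * F p := mul_nonneg (by positivity) (h.nn p)
  calc |Ω p v| ≤ ‖Ω p‖ * ‖v‖ := (Ω p).le_opNorm v
    _ ≤ (2 * (K + 1) / (d * c) * F p) * enorm2 v := mul_le_mul e5 (norm_le_en v) (norm_nonneg _) hn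
    _ = _ := by unfold ΦE; ring

lemma fderiv_cont {f : ℝ × ℝ → ℝ} (hf : ContDiff ℝ 1 f) :
    Continuous (Function.uncurry (fun p v => fderiv ℝ f p v)) := by
  have := hf.continuous_fderiv one_ne_zero
  unfold Function.uncurry
  fun_prop

/-- Good primitive for the area form. -/
lemma area_prim {F : ℝ × ℝ → ℝ} {pm pp : ℝ × ℝ} {R C c : ℝ} (hB : FB F pm pp R C c) :
    ∃ C0 > 0, ∃ h : ℝ × ℝ → ℝ, ∀ a b : ℝ, a ≤ b → ∀ γ : ℝ → ℝ × ℝ, LocallyLipschitz γ →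
      (∀ t ∈ Icc a b, ‖γ t‖ ≤ R) → |J ΦA a b γ + (h (γ b) - h (γ a))| ≤ C0 * J (ΦE F) a b γ := by
  set L := Lq (pp - pm) with hL
  have hL1 : L (pp - pm) = 1 := Lq_self (sub_ne_zero.2 hB.ne.symm)
  let h : ℝ × ℝ → ℝ := fun p => -pm.1 * p.2 - (pp.1 - pm.1) * ((L (p - pm)) ^ 2 * (p.2 - pp.2))
  have hsm : ContDiff ℝ 2 h := by
    simp only [h]; fun_prop
  have hd : ∀ p, HasFDerivAt h (-pm.1 • ContinuousLinearMap.snd ℝ ℝ ℝ - (pp.1 - pm.1) •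
      ((L (p - pm)) ^ 2 • ContinuousLinearMap.snd ℝ ℝ ℝ + (p.2 - pp.2) • ((2 * L (p - pm)) • L))) p := by
    intro p
    have e1 : HasFDerivAt (fun p : ℝ × ℝ => p.2) (ContinuousLinearMap.snd ℝ ℝ ℝ) p := hasFDerivAt_snd
    have e2 : HasFDerivAt (fun p : ℝ × ℝ => L (p - pm)) L p := by
      exact L.hasFDerivAt.comp p ((hasFDerivAt_id p).sub_const pm)
    have e3 := (e2.pow 2).mul (e1.sub_const pp.2)
    have e4 := (e1.const_mul (-pm.1)).sub (e3.const_mul (pp.1 - pm.1))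
    refine e4.congr_fderiv ?_
    ext <;> simp
  let Ω : ℝ × ℝ → (ℝ × ℝ →L[ℝ] ℝ) := fun p => p.1 • ContinuousLinearMap.snd ℝ ℝ ℝ + fderiv ℝ h p
  have hΩ : ContDiff ℝ 1 Ω := by
    have : ContDiff ℝ 1 (fderiv ℝ h) := hsm.fderiv_right (m := 1) (by norm_num)
    simp only [Ω]; fun_prop
  have z1 : Ω pm = 0 := by
    simp only [Ω, (hd pm).fderiv]
    ext <;> simp
  have z2 : Ω pp = 0 := by
    simp only [Ω, (hd pp).fderiv, hL1]
    ext <;> simp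
    ring
  obtain ⟨C0, hC0, hb⟩ := form_bound hB hΩ z1 z2
  refine ⟨C0, hC0, h, fun a b hab γ hγ hR => ?_⟩
  have hsm1 : ContDiff ℝ 1 h := hsm.of_le (by norm_num)
  have e1 := ftc_comp hsm1 hγ a b
  have i1 := J_int ΦA_cont hγ a b
  have i2 := J_int (fderiv_cont hsm1) hγ a b
  have e2 : J ΦA a b γ + (h (γ b) - h (γ a)) = ∫ t in a..b, Ω (γ t) (deriv γ t) := by
    rw [← e1]; unfold J
    rw [← intervalIntegral.integral_add i1 i2]
    rfl
  rw [e2]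
  have iE := J_int (ΦE_cont hB.cont) hγ a b
  have := intervalIntegral.norm_integral_le_of_norm_le (f := fun t => Ω (γ t) (deriv γ t)) hab
    (g := fun t => C0 * ΦE F (γ t) (deriv γ t))
    (Eventually.of_forall fun t ht => hb _ _ (hR t ⟨ht.1.le, ht.2⟩)) (iE.const_mul C0)
  rw [intervalIntegral.integral_const_mul] at this
  exact this

lemma E_low {F : ℝ × ℝ → ℝ} {pm pp : ℝ × ℝ} {R C c : ℝ} (hB : FB F pm pp R C c) :
    ∃ e > 0, ∀ a b : ℝ, a ≤ b → ∀ γ : ℝ → ℝ × ℝ, LocallyLipschitz γ →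
      (∀ t ∈ Icc a b, ‖γ t‖ ≤ R) → γ a = pm → γ b = pp → e ≤ J (ΦE F) a b γ := by
  set L := Lq (pp - pm) with hL
  have hL1 : L (pp - pm) = 1 := Lq_self (sub_ne_zero.2 hB.ne.symm)
  let h : ℝ × ℝ → ℝ := fun p => (L (p - pm)) ^ 2 / 2 - (L (p - pm)) ^ 3 / 3
  have hsm : ContDiff ℝ 2 h := by
    simp only [h]; fun_prop
  have hd : ∀ p, HasFDerivAt h ((L (p - pm) - (L (p - pm)) ^ 2) • L) p := by
    intro p
    have e2 : HasFDerivAt (fun p : ℝ × ℝ => L (p - pm)) L p := by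
      exact L.hasFDerivAt.comp p ((hasFDerivAt_id p).sub_const pm)
    have e4 := ((e2.pow 2).mul_const (1/2 : ℝ)).sub ((e2.pow 3).mul_const (1/3 : ℝ))
    refine HasFDerivAt.congr_of_eventuallyEq (e4.congr_fderiv ?_) (Eventually.of_forall fun p => ?_)
    · ext <;> simp <;> ring
    · simp only [h, Pi.sub_apply]; ring
  have hsm1 : ContDiff ℝ 1 h := hsm.of_le (by norm_num)
  have hΩ : ContDiff ℝ 1 (fderiv ℝ h) := hsm.fderiv_right (m := 1) (by norm_num)
  have z1 : fderiv ℝ h pm = 0 := by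
    rw [(hd pm).fderiv]; simp
  have z2 : fderiv ℝ h pp = 0 := by
    rw [(hd pp).fderiv, hL1]; simp
  obtain ⟨C0, hC0, hb⟩ := form_bound hB hΩ z1 z2
  refine ⟨1 / (6 * C0), by positivity, fun a b hab γ hγ hR ha hb' => ?_⟩
  have e1 := ftc_comp hsm1 hγ a b
  have iE := J_int (ΦE_cont hB.cont) hγ a b
  have := intervalIntegral.norm_integral_le_of_norm_le (f := fun t => fderiv ℝ h (γ t) (deriv γ t)) hab
    (g := fun t => C0 * ΦE F (γ t) (deriv γ t))
    (Eventually.of_forall fun t ht => hb _ _ (hR t ⟨ht.1.le, ht.2⟩)) (iE.const_mul C0)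
  rw [intervalIntegral.integral_const_mul] at this
  have e3 : (∫ t in a..b, fderiv ℝ h (γ t) (deriv γ t)) = 1 / 6 := by
    refine Eq.trans e1 ?_
    rw [ha, hb']; simp only [h, hL1]; simp; norm_num
  rw [e3] at this
  have h6 : (1:ℝ) / 6 ≤ C0 * J (ΦE F) a b γ := by
    refine le_trans ?_ this
    norm_num
  rw [div_le_iff₀ (by positivity)]
  linarith

lemma confine {W : ℝ × ℝ → ℝ} {pm pp : ℝ × ℝ} (hW : TwoWell W pm pp) {F : ℝ × ℝ → ℝ}
    (hF : F = fun p => Real.sqrt (W p)) (E1 : ℝ) (hE1 : 0 ≤ E1) :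
    ∃ R : ℝ, ‖pm‖ ≤ R ∧ ‖pp‖ ≤ R ∧ ∀ a b : ℝ, ∀ γ : ℝ → ℝ × ℝ, LocallyLipschitz γ → γ a = pm →
      J (ΦE F) a b γ ≤ E1 → ∀ t ∈ Icc a b, ‖γ t‖ ≤ R := by
  obtain ⟨c1, hc1, R0, hco⟩ := hW.coercive
  have hFc : Continuous F := by
    rw [hF]; exact hW.smooth.continuous.sqrt
  have hF0 : ∀ p, 0 ≤ F p := by rw [hF]; exact fun p => Real.sqrt_nonneg _
  set k := Real.sqrt c1 with hk
  have hkp : 0 < k := Real.sqrt_pos.2 hc1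
  set R1 := max R0 (max ‖pm‖ ‖pp‖) with hR1
  have hFk : ∀ p, R1 ≤ ‖p‖ → k ≤ F p := by
    intro p hp
    rw [hF]; exact Real.sqrt_le_sqrt (hco p ((le_max_left _ _).trans hp))
  have hm1 : ‖pm‖ ≤ R1 := (le_max_left _ _).trans (le_max_right _ _)
  have hp1 : ‖pp‖ ≤ R1 := (le_max_right _ _).trans (le_max_right _ _)
  have hEk : 0 ≤ E1 / k := by positivity
  refine ⟨R1 + E1 / k, by linarith, by linarith, ?_⟩
  intro a b γ hγ ha hE t ht
  by_cases htR : ‖γ t‖ ≤ R1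
  · linarith
  set S : Set ℝ := Icc a t ∩ {s | ‖γ s‖ ≤ R1} with hS
  have hSc : IsCompact S := isCompact_Icc.inter_right
    (isClosed_le hγ.continuous.norm continuous_const)
  have hSn : S.Nonempty := ⟨a, ⟨left_mem_Icc.2 ht.1, by change ‖γ a‖ ≤ R1; rw [ha]; exact hm1⟩⟩
  set s := sSup S with hs
  have hsS : s ∈ S := hSc.sSup_mem hSn
  have hst : s ≤ t := hsS.1.2
  have hlt : s < t := lt_of_le_of_ne hst fun h => htR (h ▸ hsS.2)
  have hIoo : Ioo s t ⊆ {r | R1 ≤ ‖γ r‖} := by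
    intro r hr
    by_contra hcon
    have : r ∈ S := ⟨⟨hsS.1.1.trans hr.1.le, hr.2.le⟩, (not_le.1 (show ¬ R1 ≤ ‖γ r‖ from hcon)).le⟩
    exact absurd (le_csSup hSc.bddAbove this) (not_le.2 hr.1)
  have hIcc : Icc s t ⊆ {r | R1 ≤ ‖γ r‖} := by
    rw [← closure_Ioo hlt.ne]
    exact closure_minimal hIoo (isClosed_le continuous_const hγ.continuous.norm)
  have h1 := norm_sub_le_J hγ hst
  have h2 : J (fun _ v => ‖v‖) s t γ ≤ J (fun p v => (1 / k) * ΦE F p v) s t γ := by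
    refine J_mono cont_norm ?_ hγ hst ?_
    · have := ΦE_cont hFc
      unfold Function.uncurry at this ⊢
      fun_prop
    · intro r hr
      have e1 := hFk _ (hIcc hr)
      have e2 := mul_le_mul e1 (norm_le_en (deriv γ r)) (norm_nonneg _) (hF0 _)
      rw [div_mul_eq_mul_div, le_div_iff₀ hkp, one_mul, mul_comm]
      exact e2
  have h3 : J (fun p v => (1 / k) * ΦE F p v) s t γ = (1 / k) * J (ΦE F) s t γ :=
    intervalIntegral.integral_const_mul _ _
  have h4 := JE_sub hFc hF0 hγ hsS.1.1 hst ht.2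
  have h5 : (1 / k) * J (ΦE F) s t γ ≤ E1 / k := by
    rw [div_mul_eq_mul_div, one_mul]
    gcongr
    linarith
  have h6 := norm_sub_norm_le (γ t) (γ s)
  have h7 : ‖γ s‖ ≤ R1 := hsS.2
  linarith

lemma FB_of {W : ℝ × ℝ → ℝ} {pm pp : ℝ × ℝ} (hW : TwoWell W pm pp) {F : ℝ × ℝ → ℝ}
    (hF : F = fun p => Real.sqrt (W p)) (R : ℝ) (hm : ‖pm‖ ≤ R) (hp : ‖pp‖ ≤ R) :
    ∃ C c, FB F pm pp R C c := by
  obtain ⟨C, hC, c, hc, -, -, h3, h4, h5⟩ := W_facts hW R hm hp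
  have hFc : Continuous F := by
    rw [hF]; exact hW.smooth.continuous.sqrt
  have hF0 : ∀ p, 0 ≤ F p := by rw [hF]; exact fun p => Real.sqrt_nonneg _
  refine ⟨√C, √c, hFc, hF0, hm, hp, Real.sqrt_pos.2 hC, Real.sqrt_pos.2 hc, hW.wells_ne, ?_, ?_, ?_⟩
  · intro p h
    rw [hF]
    refine (Real.sqrt_le_sqrt (h4 p h)).trans_eq ?_
    rw [Real.sqrt_mul hC.le, Real.sqrt_sq (norm_nonneg _)]
  · intro p h
    rw [hF]
    refine (Real.sqrt_le_sqrt (h5 p h)).trans_eq ?_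
    rw [Real.sqrt_mul hC.le, Real.sqrt_sq (norm_nonneg _)]
  · intro p h
    rw [hF]
    refine Eq.trans_le ?_ (Real.sqrt_le_sqrt (h3 p h))
    rw [Real.sqrt_mul hc.le, Real.sqrt_sq (by positivity)]

lemma FB.pos {F : ℝ × ℝ → ℝ} {pm pp : ℝ × ℝ} {R C c : ℝ} (hB : FB F pm pp R C c) {p : ℝ × ℝ}
    (hp : ‖p‖ ≤ R) (h1 : p ≠ pm) (h2 : p ≠ pp) : 0 < F p := by
  refine lt_of_lt_of_le ?_ (hB.lo p hp)
  have := hB.cpos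
  have := norm_pos_iff.2 (sub_ne_zero.2 h1)
  have := norm_pos_iff.2 (sub_ne_zero.2 h2)
  positivity

lemma E_pos {F : ℝ × ℝ → ℝ} {pm pp : ℝ × ℝ} {R C c : ℝ} (hB : FB F pm pp R C c) {γ : ℝ → ℝ × ℝ}
    (hγ : LocallyLipschitz γ) {s t : ℝ} (hst : s ≤ t) (hR : ∀ r ∈ Icc s t, ‖γ r‖ ≤ R)
    (hw : ∀ r ∈ Icc s t, γ r ≠ pm ∧ γ r ≠ pp) (hne : γ s ≠ γ t) : 0 < J (ΦE F) s t γ := by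
  obtain ⟨r0, hr0, hm⟩ := isCompact_Icc.exists_isMinOn (nonempty_Icc.2 hst)
    (hB.cont.comp hγ.continuous).continuousOn
  have hk : 0 < F (γ r0) := hB.pos (hR r0 hr0) (hw r0 hr0).1 (hw r0 hr0).2
  set k := F (γ r0) with hkd
  have h1 := norm_sub_le_J hγ hst
  have h2 : J (fun _ v => ‖v‖) s t γ ≤ J (fun p v => (1 / k) * ΦE F p v) s t γ := by
    refine J_mono cont_norm ?_ hγ hst ?_
    · have := ΦE_cont hB.cont
      unfold Function.uncurry at this ⊢
      fun_prop
    · intro r hr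
      have e1 : k ≤ F (γ r) := hm hr
      have e2 := mul_le_mul e1 (norm_le_en (deriv γ r)) (norm_nonneg _) (hB.nn _)
      rw [div_mul_eq_mul_div, le_div_iff₀ hk, one_mul, mul_comm]
      exact e2
  have h3 : J (fun p v => (1 / k) * ΦE F p v) s t γ = (1 / k) * J (ΦE F) s t γ :=
    intervalIntegral.integral_const_mul _ _
  have h4 : 0 < ‖γ t - γ s‖ := norm_pos_iff.2 (sub_ne_zero.2 hne.symm)
  have h5 : 0 < (1 / k) * J (ΦE F) s t γ := by linarith
  have h6 : 0 < 1 / k := by positivity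
  exact (pos_iff_pos_of_mul_pos h5).1 h6

lemma length_bound {F : ℝ × ℝ → ℝ} {pm pp : ℝ × ℝ} {R C c : ℝ} (hB : FB F pm pp R C c) {γ : ℝ → ℝ × ℝ}
    (hγ : LocallyLipschitz γ) {α β : ℝ} (hαβ : α < β) (hα : γ α = pm) (hβ : γ β = pp)
    (hR : ∀ r ∈ Icc α β, ‖γ r‖ ≤ R) (hw : ∀ r ∈ Ioo α β, γ r ≠ pm ∧ γ r ≠ pp)
    {D e : ℝ} (hD : 0 < D) (he : 0 < e)
    (h1 : ∀ t ∈ Icc α β, J (ΦE F) α t γ ≤ D * ‖γ t - pm‖ ^ 2)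
    (h2 : ∀ t ∈ Icc α β, J (ΦE F) t β γ ≤ D * ‖γ t - pp‖ ^ 2)
    (hE : e ≤ J (ΦE F) α β γ) :
    J (fun _ v => ‖v‖) α β γ ≤ 2 * D / (c * √e) * (2 * √(J (ΦE F) α β γ)) := by
  have hc := hB.cpos
  have hse : 0 < √e := Real.sqrt_pos.2 he
  set E := J (ΦE F) α β γ with hEd
  set f : ℝ → ℝ := fun t => ΦE F (γ t) (deriv γ t) with hf
  have hf0 : ∀ t, 0 ≤ f t := fun t => ΦE_nn hB.nn _ _
  set u : ℝ → ℝ := fun t => J (ΦE F) α t γ with hu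
  have hint : ∀ a b, IntervalIntegrable f volume a b := J_int (ΦE_cont hB.cont) hγ
  have hJ := J_add (ΦE_cont hB.cont) hγ
  have hv : ∀ t, J (ΦE F) t β γ = E - u t := fun t => by have := hJ α t β; simp only [hu]; linarith
  have hmono : ∀ s t, s ≤ t → u s ≤ u t := by
    intro s t hst
    have := hJ α s t
    have := JE_nn hB.nn hst γ
    simp only [hu]; linarith
  have hu0 : u α = 0 := by simp [hu, J]
  have huE : u β = E := rfl
  -- positivity in the interior
  have hupos : ∀ t ∈ Ioo α β, 0 < u t := by
    intro t ht
    obtain ⟨r, hr, hne⟩ : ∃ r ∈ Ioo α t, γ r ≠ γ t := by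
      by_contra hcon
      push Not at hcon
      have hcl : Icc α t ⊆ {r | γ r = γ t} := by
        rw [← closure_Ioo ht.1.ne]
        exact closure_minimal hcon (isClosed_eq hγ.continuous continuous_const)
      have : γ α = γ t := hcl (left_mem_Icc.2 ht.1.le)
      exact (hw t ht).1 (this ▸ hα)
    have hp := E_pos hB hγ hr.2.le (fun x hx => hR x ⟨hr.1.le.trans hx.1, hx.2.trans ht.2.le⟩)
      (fun x hx => hw x ⟨hr.1.trans_le hx.1, hx.2.trans_lt ht.2⟩) hne
    exact hp.trans_le (JE_sub hB.cont hB.nn hγ hr.1.le hr.2.le le_rfl)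
  have hvpos : ∀ t ∈ Ioo α β, 0 < E - u t := by
    intro t ht
    obtain ⟨r, hr, hne⟩ : ∃ r ∈ Ioo t β, γ t ≠ γ r := by
      by_contra hcon
      push Not at hcon
      have hcl : Icc t β ⊆ {r | γ t = γ r} := by
        rw [← closure_Ioo ht.2.ne]
        exact closure_minimal hcon (isClosed_eq continuous_const hγ.continuous)
      have : γ t = γ β := hcl (right_mem_Icc.2 ht.2.le)
      exact (hw t ht).2 (this.trans hβ)
    have hp := E_pos hB hγ hr.1.le (fun x hx => hR x ⟨ht.1.le.trans hx.1, hx.2.trans hr.2.le⟩)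
      (fun x hx => hw x ⟨ht.1.trans_le hx.1, hx.2.trans_lt hr.2⟩) hne
    rw [← hv]
    exact hp.trans_le (JE_sub hB.cont hB.nn hγ le_rfl hr.1.le hr.2.le)
  set g : ℝ → ℝ := fun t => √(u t) - √(E - u t) with hg
  have hgm : MonotoneOn g (uIcc α β) := by
    intro s _ t _ hst
    have := hmono s t hst
    exact sub_le_sub (Real.sqrt_le_sqrt this) (Real.sqrt_le_sqrt (by linarith))
  have hgi := hgm.intervalIntegrable_deriv
  have hgle : ∫ t in α..β, deriv g t ≤ g β - g α := by
    have h := hgm.intervalIntegral_deriv_mem_uIcc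
    rw [uIcc_of_le] at h
    · exact h.2
    · exact sub_nonneg.2 (hgm (by simp) (by simp) hαβ.le)
  set K := 2 * D / (c * √e) with hK
  have hKp : 0 < K := by positivity
  have key : J (fun _ v => ‖v‖) α β γ ≤ ∫ t in α..β, K * deriv g t := by
    refine intervalIntegral.integral_mono_ae_restrict hαβ.le (J_int cont_norm hγ α β) (hgi.const_mul K) ?_
    rw [EventuallyLE, ← restrict_Ioo_eq_restrict_Icc, ae_restrict_iff' measurableSet_Ioo]
    filter_upwards [(hint α β).ae_hasDerivAt_integral] with t ht hti
    have htI : t ∈ Icc α β := Ioo_subset_Icc_self hti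
    have hdu : HasDerivAt u (f t) t := ht (by rwa [uIcc_of_le hαβ.le]) α (by simp)
    have up := hupos t hti
    have vp := hvpos t hti
    have hdg : HasDerivAt g (f t / (2 * √(u t)) - (0 - f t) / (2 * √(E - u t))) t := by
      exact (hdu.sqrt up.ne').sub (((hasDerivAt_const t E).sub hdu).sqrt vp.ne')
    rw [hdg.deriv]
    set x := √(u t) with hx
    set y := √(E - u t) with hy
    have hxp : 0 < x := Real.sqrt_pos.2 up
    have hyp : 0 < y := Real.sqrt_pos.2 vp
    have hx2 : x ^ 2 = u t := Real.sq_sqrt up.le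
    have hy2 : y ^ 2 = E - u t := Real.sq_sqrt vp.le
    have hxy : √e ≤ x + y := by
      apply Real.sqrt_le_iff.2
      refine ⟨by positivity, ?_⟩
      nlinarith
    have hxD : x ≤ √D * ‖γ t - pm‖ := by
      rw [hx]
      refine (Real.sqrt_le_sqrt (h1 t htI)).trans_eq ?_
      rw [Real.sqrt_mul hD.le, Real.sqrt_sq (norm_nonneg _)]
    have hyD : y ≤ √D * ‖γ t - pp‖ := by
      rw [hy, ← hv]
      refine (Real.sqrt_le_sqrt (h2 t htI)).trans_eq ?_
      rw [Real.sqrt_mul hD.le, Real.sqrt_sq (norm_nonneg _)]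
    have hxyD : x * y ≤ D * (‖γ t - pm‖ * ‖γ t - pp‖) := by
      refine (mul_le_mul hxD hyD hyp.le (by positivity)).trans_eq ?_
      have := Real.mul_self_sqrt hD.le
      linear_combination (‖γ t - pm‖ * ‖γ t - pp‖) * this
    have hlo := hB.lo _ (hR t htI)
    have hfl : c * (x * y) * ‖deriv γ t‖ ≤ D * f t := by
      have a1 := mul_le_mul hlo (norm_le_en (deriv γ t)) (norm_nonneg _) (hB.nn _)
      have a2 := mul_le_mul_of_nonneg_right hxyD (mul_nonneg hc.le (norm_nonneg (deriv γ t)))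
      have a3 := mul_le_mul_of_nonneg_left a1 hD.le
      have : f t = F (γ t) * enorm2 (deriv γ t) := rfl
      rw [this]; linarith
    have e1 : f t / (2 * x) - (0 - f t) / (2 * y) = f t * (x + y) / (2 * (x * y)) := by
      field_simp; ring
    change ‖deriv γ t‖ ≤ K * (f t / (2 * x) - (0 - f t) / (2 * y))
    rw [e1, hK, div_mul_div_comm, le_div_iff₀ (by positivity)]
    have a4 := mul_le_mul_of_nonneg_left hxy (hf0 t)
    have a5 := mul_le_mul_of_nonneg_left hfl (show 0 ≤ 2 * √e by positivity)
    have a6 := mul_le_mul_of_nonneg_left a4 (show 0 ≤ 2 * D by positivity)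
    linarith
  rw [intervalIntegral.integral_const_mul] at key
  refine key.trans (mul_le_mul_of_nonneg_left (hgle.trans_eq ?_) hKp.le)
  simp only [hg, hu0, huE]
  simp; ring

def AreaP (F : ℝ × ℝ → ℝ) (R C0 : ℝ) (h : ℝ × ℝ → ℝ) : Prop :=
  ∀ a b : ℝ, a ≤ b → ∀ γ : ℝ → ℝ × ℝ, LocallyLipschitz γ →
      (∀ t ∈ Icc a b, ‖γ t‖ ≤ R) → |J ΦA a b γ + (h (γ b) - h (γ a))| ≤ C0 * J (ΦE F) a b γ

lemma restrict_le {F : ℝ × ℝ → ℝ} (hc : Continuous F) (hF0 : ∀ p, 0 ≤ F p) {R C0 : ℝ} {h : ℝ × ℝ → ℝ}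
    (hA : AreaP F R C0 h) {κ : ℝ} (hκ : 0 ≤ κ) (hκC : κ * C0 ≤ 1 / 2) (A : ℝ)
    {γ : ℝ → ℝ × ℝ} (hγ : LocallyLipschitz γ) {a α β b : ℝ} (h1 : a ≤ α) (h3 : β ≤ b) (h2 : α ≤ β)
    (hR : ∀ t ∈ Icc a b, ‖γ t‖ ≤ R) (e1 : γ α = γ a) (e2 : γ β = γ b) :
    Gf F κ A α β γ ≤ Gf F κ A a b γ := by
  have a1 := hA a α h1 γ hγ (fun t ht => hR t ⟨ht.1, ht.2.trans (h2.trans h3)⟩)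
  have a2 := hA β b h3 γ hγ (fun t ht => hR t ⟨(h1.trans h2).trans ht.1, ht.2⟩)
  rw [e1, sub_self, add_zero] at a1
  rw [e2, sub_self, add_zero] at a2
  have j1 := J_add (ΦE_cont hc) hγ a α β
  have j2 := J_add (ΦE_cont hc) hγ a β b
  have k1 := J_add ΦA_cont hγ a α β
  have k2 := J_add ΦA_cont hγ a β b
  have p1 := JE_nn hF0 h1 γ
  have p2 := JE_nn hF0 h3 γ
  unfold Gf
  have t1 : |J ΦA α β γ - A| ≤ |J ΦA a b γ - A| + (C0 * J (ΦE F) a α γ + C0 * J (ΦE F) β b γ) := by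
    have : J ΦA α β γ - A = (J ΦA a b γ - A) + (-J ΦA a α γ + -J ΦA β b γ) := by linarith
    rw [this]
    refine (abs_add_le _ _).trans (add_le_add le_rfl ((abs_add_le _ _).trans ?_))
    rw [abs_neg, abs_neg]; linarith
  have t2 := mul_le_mul_of_nonneg_left t1 hκ
  have t3 := mul_le_mul_of_nonneg_right hκC p1
  have t4 := mul_le_mul_of_nonneg_right hκC p2
  nlinarith

lemma compare_le {F : ℝ × ℝ → ℝ} (hc : Continuous F) {R C0 : ℝ} {h : ℝ × ℝ → ℝ}
    (hA : AreaP F R C0 h) {κ : ℝ} (hκ : 0 ≤ κ) (hκC : κ * C0 ≤ 1 / 2) (A : ℝ) (hF0 : ∀ p, 0 ≤ F p)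
    {γ β : ℝ → ℝ × ℝ} (hγ : LocallyLipschitz γ) (hβ : LocallyLipschitz β) {a s t b : ℝ} (h1 : a ≤ s)
    (h2 : s ≤ t) (h3 : t ≤ b)
    (hR : ∀ r ∈ Icc s t, ‖γ r‖ ≤ R) (hR' : ∀ r ∈ Icc s t, ‖β r‖ ≤ R)
    (q1 : EqOn γ β (Icc a s)) (q2 : EqOn γ β (Icc t b))
    (hle : Gf F κ A a b γ ≤ Gf F κ A a b β) : J (ΦE F) s t γ ≤ 3 * J (ΦE F) s t β := by
  have a1 := hA s t h2 γ hγ hR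
  have a2 := hA s t h2 β hβ hR'
  have es : γ s = β s := q1 (right_mem_Icc.2 h1)
  have et : γ t = β t := q2 (left_mem_Icc.2 h3)
  rw [es, et] at a1
  have j1 := J_add (ΦE_cont hc) hγ a s t
  have j2 := J_add (ΦE_cont hc) hγ a t b
  have k1 := J_add ΦA_cont hγ a s t
  have k2 := J_add ΦA_cont hγ a t b
  have j1' := J_add (ΦE_cont hc) hβ a s t
  have j2' := J_add (ΦE_cont hc) hβ a t b
  have k1' := J_add ΦA_cont hβ a s t
  have k2' := J_add ΦA_cont hβ a t b
  have c1 : J (ΦE F) a s γ = J (ΦE F) a s β := J_congr h1 (q1.mono Ioo_subset_Icc_self)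
  have c2 : J (ΦE F) t b γ = J (ΦE F) t b β := J_congr h3 (q2.mono Ioo_subset_Icc_self)
  have c3 : J ΦA a s γ = J ΦA a s β := J_congr h1 (q1.mono Ioo_subset_Icc_self)
  have c4 : J ΦA t b γ = J ΦA t b β := J_congr h3 (q2.mono Ioo_subset_Icc_self)
  have t1 : |J ΦA a b β - A| ≤ |J ΦA a b γ - A| + (C0 * J (ΦE F) s t β + C0 * J (ΦE F) s t γ) := by
    have : J ΦA a b β - A = (J ΦA a b γ - A) + ((J ΦA s t β + (h (β t) - h (β s))) - (J ΦA s t γ + (h (β t) - h (β s)))) := by linarith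
    rw [this]
    refine (abs_add_le _ _).trans (add_le_add le_rfl ((abs_sub _ _).trans ?_))
    linarith
  have p1 := JE_nn hF0 h2 γ
  have p2 := JE_nn hF0 h2 β
  have t2 := mul_le_mul_of_nonneg_left t1 hκ
  have t3 := mul_le_mul_of_nonneg_right hκC p1
  have t4 := mul_le_mul_of_nonneg_right hκC p2
  unfold Gf at hle
  nlinarith

lemma hitting {γ : ℝ → ℝ × ℝ} (hγ : Continuous γ) {a b : ℝ} (hab : a ≤ b) {pm pp : ℝ × ℝ}
    (hne : pm ≠ pp) (ha : γ a = pm) (hb : γ b = pp) :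
    ∃ α β, a ≤ α ∧ α < β ∧ β ≤ b ∧ γ α = pm ∧ γ β = pp ∧ ∀ r ∈ Ioo α β, γ r ≠ pm ∧ γ r ≠ pp := by
  set S : Set ℝ := Icc a b ∩ {t | γ t = pp} with hS
  have hSc : IsCompact S := isCompact_Icc.inter_right (isClosed_eq hγ continuous_const)
  have hSn : S.Nonempty := ⟨b, right_mem_Icc.2 hab, hb⟩
  have hβ : sInf S ∈ S := hSc.sInf_mem hSn
  set β := sInf S
  set T : Set ℝ := Icc a β ∩ {t | γ t = pm} with hT
  have hTc : IsCompact T := isCompact_Icc.inter_right (isClosed_eq hγ continuous_const)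
  have hTn : T.Nonempty := ⟨a, left_mem_Icc.2 hβ.1.1, ha⟩
  have hα : sSup T ∈ T := hTc.sSup_mem hTn
  set α := sSup T
  have hα2 : γ α = pm := hα.2
  have hβ2 : γ β = pp := hβ.2
  refine ⟨α, β, hα.1.1, lt_of_le_of_ne hα.1.2 ?_, hβ.1.2, hα2, hβ2, ?_⟩
  · intro h
    rw [h] at hα2
    exact hne (hα2.symm.trans hβ2)
  · intro r hr
    constructor
    · intro h
      have : r ∈ T := ⟨⟨hα.1.1.trans hr.1.le, hr.2.le⟩, h⟩
      exact absurd (le_csSup hTc.bddAbove this) (not_le.2 hr.1)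
    · intro h
      have : r ∈ S := ⟨⟨hα.1.1.trans hr.1.le, hr.2.le.trans hβ.1.2⟩, h⟩
      exact absurd (csInf_le hSc.bddBelow this) (not_le.2 hr.2)

def seg (s t : ℝ) (P Q : ℝ × ℝ) (r : ℝ) : ℝ × ℝ := P + ((r - s) / (t - s)) • (Q - P)

lemma seg_deriv (s t : ℝ) (P Q : ℝ × ℝ) (r : ℝ) :
    HasDerivAt (seg s t P Q) ((1 / (t - s)) • (Q - P)) r := by
  unfold seg
  exact (((((hasDerivAt_id r).sub_const s).div_const (t - s)).smul_const (Q - P)).const_add P)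

lemma seg_left (s t : ℝ) (P Q : ℝ × ℝ) : seg s t P Q s = P := by simp [seg]

lemma seg_right {s t : ℝ} (h : s < t) (P Q : ℝ × ℝ) : seg s t P Q t = Q := by
  simp [seg, div_self (sub_pos.2 h).ne']

lemma seg_dist {s t : ℝ} (h : s < t) (P Q : ℝ × ℝ) {x y : ℝ} (hxy : x ≤ y) {Λ : ℝ}
    (hΛ : ‖Q - P‖ ≤ Λ * (t - s)) : ‖seg s t P Q y - seg s t P Q x‖ ≤ Λ * (y - x) := by
  have ht := sub_pos.2 h
  have e : seg s t P Q y - seg s t P Q x = ((y - x) / (t - s)) • (Q - P) := by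
    unfold seg
    rw [add_sub_add_left_eq_sub, ← sub_smul]
    congr 1; field_simp; ring
  rw [e, norm_smul, Real.norm_of_nonneg (div_nonneg (sub_nonneg.2 hxy) ht.le)]
  calc _ ≤ (y - x) / (t - s) * (Λ * (t - s)) :=
        mul_le_mul_of_nonneg_left hΛ (div_nonneg (sub_nonneg.2 hxy) ht.le)
    _ = _ := by field_simp

lemma seg_LL {s t : ℝ} (h : s < t) (P Q : ℝ × ℝ) : LocallyLipschitz (seg s t P Q) := by
  have : ContDiff ℝ 1 (seg s t P Q) := by
    unfold seg; fun_prop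
  exact this.locallyLipschitz

lemma seg_comb {s t : ℝ} (h : s < t) (P Q : ℝ × ℝ) {r : ℝ} (hr : r ∈ Icc s t) :
    seg s t P Q r ∈ segment ℝ P Q := by
  rw [segment_eq_image']
  refine ⟨(r - s) / (t - s), ⟨div_nonneg (sub_nonneg.2 hr.1) (sub_pos.2 h).le, ?_⟩, rfl⟩
  rw [div_le_one (sub_pos.2 h)]
  linarith [hr.2]

lemma seg_E {F : ℝ × ℝ → ℝ} (hc : Continuous F) {s t : ℝ} (h : s < t) (P Q : ℝ × ℝ) {M : ℝ} 
    (hM : ∀ r ∈ Icc s t, F (seg s t P Q r) ≤ M) (hM0 : 0 ≤ M) :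
    J (ΦE F) s t (seg s t P Q) ≤ 2 * M * ‖Q - P‖ := by
  have ht := sub_pos.2 h
  have h1 : J (ΦE F) s t (seg s t P Q) ≤ ∫ r in s..t, M * ((1 / (t - s)) * (2 * ‖Q - P‖)) := by
    refine intervalIntegral.integral_mono_on h.le (J_int (ΦE_cont hc) (seg_LL h P Q) s t)
      intervalIntegrable_const ?_
    intro r hr
    rw [(seg_deriv s t P Q r).deriv]
    unfold ΦE
    rw [en_smul _ (by positivity)]
    refine mul_le_mul (hM r hr) (mul_le_mul_of_nonneg_left (en_le_norm _) (by positivity)) ?_ hM0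
    exact mul_nonneg (by positivity) (en_nonneg _)
  refine h1.trans_eq ?_
  rw [intervalIntegral.integral_const, smul_eq_mul]
  field_simp

lemma glue1 {f : ℝ → ℝ × ℝ} {K s : ℝ} {U : ℝ → Prop}
    (h1 : ∀ x y, x ≤ y → y ≤ s → ‖f y - f x‖ ≤ K * (y - x))
    (h2 : ∀ x y, s ≤ x → x ≤ y → U y → ‖f y - f x‖ ≤ K * (y - x)) :
    ∀ x y, x ≤ y → U y → ‖f y - f x‖ ≤ K * (y - x) := by
  intro x y hxy hU
  rcases le_total y s with hy | hy
  · exact h1 x y hxy hy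
  rcases le_total s x with hx | hx
  · exact h2 x y hx hxy hU
  have a1 := h1 x s hx le_rfl
  have a2 := h2 s y le_rfl hy hU
  have := norm_sub_le_norm_sub_add_norm_sub (f y) (f s) (f x)
  linarith

lemma lip_of {f : ℝ → ℝ × ℝ} {K : ℝ≥0} (h : ∀ x y, x ≤ y → ‖f y - f x‖ ≤ K * (y - x)) :
    LipschitzWith K f := by
  apply LipschitzWith.of_dist_le_mul
  intro x y
  rcases le_total x y with hxy | hxy
  · rw [dist_comm, dist_comm x y, dist_eq_norm, Real.dist_eq, abs_of_nonneg (sub_nonneg.2 hxy)]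
    exact h x y hxy
  · rw [dist_eq_norm, Real.dist_eq, abs_of_nonneg (sub_nonneg.2 hxy)]
    exact h y x hxy

lemma KC_norm {Λ : ℝ≥0} {γ : ℝ → ℝ × ℝ} (h : LipschitzWith Λ γ) {x y : ℝ} (hxy : x ≤ y) :
    ‖γ y - γ x‖ ≤ Λ * (y - x) := by
  have := h.dist_le_mul y x
  rwa [dist_eq_norm, Real.dist_eq, abs_of_nonneg (sub_nonneg.2 hxy)] at this

lemma replace {γ : ℝ → ℝ × ℝ} {Λ : ℝ≥0} (hγ : LipschitzWith Λ γ) {s t : ℝ} (hst : s < t) :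
    ∃ β : ℝ → ℝ × ℝ, LipschitzWith Λ β ∧ EqOn γ β (Iic s) ∧ EqOn γ β (Ici t) ∧
      EqOn (seg s t (γ s) (γ t)) β (Icc s t) := by
  let β : ℝ → ℝ × ℝ := fun r => if r ≤ s then γ r else if r ≤ t then seg s t (γ s) (γ t) r else γ r
  have q1 : EqOn γ β (Iic s) := fun r hr => by
    have hr : r ≤ s := hr
    simp [β, hr]
  have q2 : EqOn γ β (Ici t) := fun r hr => by
    have hr : t ≤ r := hr
    have h1 : ¬ r ≤ s := not_le.2 (hst.trans_le hr)
    rcases hr.eq_or_lt with h | h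
    · subst h; simp [β, h1, seg_right hst]
    · simp [β, h1, not_le.2 h]
  have q3 : EqOn (seg s t (γ s) (γ t)) β (Icc s t) := fun r hr => by
    rcases hr.1.eq_or_lt with h | h
    · subst h; simp [β, seg_left]
    · simp [β, not_le.2 h, hr.2]
  refine ⟨β, lip_of ?_, q1, q2, q3⟩
  have b1 : ∀ x y, x ≤ y → y ≤ s → ‖β y - β x‖ ≤ Λ * (y - x) := by
    intro x y hxy hy
    rw [← q1 hy, ← q1 (hxy.trans hy : x ≤ s)]
    exact KC_norm hγ hxy
  have b2 : ∀ x y, s ≤ x → x ≤ y → y ≤ t → ‖β y - β x‖ ≤ Λ * (y - x) := by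
    intro x y hx hxy hy
    rw [← q3 ⟨hx.trans hxy, hy⟩, ← q3 ⟨hx, hxy.trans hy⟩]
    exact seg_dist hst _ _ hxy (KC_norm hγ hst.le)
  have b3 : ∀ x y, t ≤ x → x ≤ y → True → ‖β y - β x‖ ≤ Λ * (y - x) := by
    intro x y hx hxy _
    rw [← q2 hx, ← q2 (hx.trans hxy : t ≤ y)]
    exact KC_norm hγ hxy
  intro x y hxy
  exact glue1 (U := fun _ => True) (glue1 (U := fun y => y ≤ t) b1 b2) b3 x y hxy trivial

lemma ball_seg {P Q p : ℝ × ℝ} {R : ℝ} (hP : ‖P‖ ≤ R) (hQ : ‖Q‖ ≤ R) (h : p ∈ segment ℝ P Q) : ‖p‖ ≤ R := by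
  have := (convex_closedBall (0 : ℝ × ℝ) R).segment_subset (by simpa using hP) (by simpa using hQ) h
  simpa using this

lemma ball_seg' {P Q p : ℝ × ℝ} (h : p ∈ segment ℝ P Q) : ‖p - Q‖ ≤ ‖P - Q‖ ∧ ‖p - P‖ ≤ ‖Q - P‖ := by
  constructor
  · have := (convex_closedBall Q ‖P - Q‖).segment_subset (x := P) (y := Q)
      (by simp [dist_eq_norm]) (by simp) h
    simpa [dist_eq_norm] using this
  · have := (convex_closedBall P ‖Q - P‖).segment_subset (x := P) (y := Q)
      (by simp) (by simp [dist_eq_norm]) h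
    simpa [dist_eq_norm] using this

/-- A priori bound on the energy of the pieces of a minimizer. -/
lemma piece_bound {F : ℝ × ℝ → ℝ} {pm pp : ℝ × ℝ} {R C c : ℝ} (hB : FB F pm pp R C c)
    {C0 : ℝ} {h : ℝ × ℝ → ℝ} (hA : AreaP F R C0 h) {κ : ℝ} (hκ : 0 ≤ κ) (hκC : κ * C0 ≤ 1 / 2) {A : ℝ}
    {Λ : ℝ≥0} {γ : ℝ → ℝ × ℝ} (hγ : KC Λ pm pp γ)
    (hmin : ∀ β, KC Λ pm pp β → Gf F κ A 0 1 γ ≤ Gf F κ A 0 1 β)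
    (hR : ∀ t ∈ Icc (0:ℝ) 1, ‖γ t‖ ≤ R) :
    ∀ t ∈ Icc (0:ℝ) 1, J (ΦE F) 0 t γ ≤ 6 * C * ‖γ t - pm‖ ^ 2 ∧ J (ΦE F) t 1 γ ≤ 6 * C * ‖γ t - pp‖ ^ 2 := by
  have hC := hB.Cpos
  have gen : ∀ s t : ℝ, 0 ≤ s → s < t → t ≤ 1 → ∀ M : ℝ, 0 ≤ M →
      (∀ p ∈ segment ℝ (γ s) (γ t), F p ≤ M) → J (ΦE F) s t γ ≤ 3 * (2 * M * ‖γ t - γ s‖) := by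
    intro s t hs hst ht M hM0 hM
    have hRs := hR s ⟨hs, hst.le.trans ht⟩
    have hRt := hR t ⟨hs.trans hst.le, ht⟩
    obtain ⟨β, hβ, q1, q2, q3⟩ := replace hγ.1 hst
    have hβK : KC Λ pm pp β :=
      ⟨hβ, (q1 (show (0:ℝ) ≤ s from hs)).symm.trans hγ.2.1, (q2 (show t ≤ (1:ℝ) from ht)).symm.trans hγ.2.2⟩
    have := compare_le hB.cont hA hκ hκC A hB.nn hγ.1.locallyLipschitz hβ.locallyLipschitz hs hst.le ht
      (fun r hr => hR r ⟨hs.trans hr.1, hr.2.trans ht⟩)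
      (fun r hr => by rw [← q3 hr]; exact ball_seg hRs hRt (seg_comb hst _ _ hr))
      (q1.mono fun r hr => hr.2) (q2.mono fun r hr => hr.1) (hmin β hβK)
    refine this.trans (mul_le_mul_of_nonneg_left ?_ (by norm_num))
    rw [← J_congr hst.le (q3.mono Ioo_subset_Icc_self)]
    exact seg_E hB.cont hst _ _ (fun r hr => hM _ (seg_comb hst _ _ hr)) hM0
  intro t ht
  constructor
  · rcases ht.1.eq_or_lt with h0 | h0
    · subst h0
      have : J (ΦE F) 0 0 γ = 0 := by simp [J]
      rw [this]; positivity
    · have := gen 0 t le_rfl h0 ht.2 (C * ‖γ t - pm‖) (by positivity) ?_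
      · rw [hγ.2.1] at this
        linarith [sq ‖γ t - pm‖]
      · rw [hγ.2.1]
        intro p hp
        refine (hB.up_m p (ball_seg hB.hm (hR t ht) hp)).trans (mul_le_mul_of_nonneg_left (ball_seg' hp).2 hC.le)
  · rcases ht.2.eq_or_lt with h0 | h0
    · subst h0
      have : J (ΦE F) 1 1 γ = 0 := by simp [J]
      rw [this]; positivity
    · have := gen t 1 ht.1 h0 le_rfl (C * ‖γ t - pp‖) (by positivity) ?_
      · rw [hγ.2.2, norm_sub_rev pp] at this
        linarith [sq ‖γ t - pp‖]
      · rw [hγ.2.2]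
        intro p hp
        refine (hB.up_p p (ball_seg (hR t ht) hB.hp hp)).trans (mul_le_mul_of_nonneg_left (ball_seg' hp).1 hC.le)

def Hom (Φ : ℝ × ℝ → ℝ × ℝ → ℝ) : Prop := ∀ p v, ∀ c : ℝ, 0 < c → Φ p (c • v) = c * Φ p v

lemma arclen {γ : ℝ → ℝ × ℝ} (hγ : LocallyLipschitz γ) {a b : ℝ} (hab : a < b) {L : ℝ≥0}
    (hL : J (fun _ v => ‖v‖) a b γ ≤ L) :
    ∃ β, KC (L + 1) (γ a) (γ b) β ∧ ∀ Φ, Hom Φ → J Φ 0 1 β = J Φ a b γ := by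
  obtain ⟨K, hK⟩ := ll_bound hγ a b
  let γ1 : ℝ → ℝ × ℝ := fun t => γ (projIcc a b hab.le t)
  have hγ1 : LipschitzWith K γ1 := by
    have h1 : LipschitzWith K (fun x : Icc a b => γ x) := lipschitzOnWith_iff_restrict.1 hK
    have := h1.comp (LipschitzWith.projIcc hab.le)
    rwa [mul_one] at this
  have hll := hγ1.locallyLipschitz
  have heq : EqOn γ1 γ (Icc a b) := fun t ht => by simp only [γ1, projIcc_of_mem hab.le ht]
  have heJ : ∀ Φ, J Φ a b γ1 = J Φ a b γ := fun Φ => J_congr hab.le (heq.mono Ioo_subset_Icc_self)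
  have hba := sub_pos.2 hab
  set δ := 1 / (b - a) with hδ
  have hδp : 0 < δ := by positivity
  set g : ℝ → ℝ := fun r => ‖deriv γ1 r‖ + δ with hg
  have hni : ∀ x y, IntervalIntegrable (fun r => ‖deriv γ1 r‖) volume x y := J_int cont_norm hll
  have hgi : ∀ x y, IntervalIntegrable g volume x y := fun x y => (hni x y).add intervalIntegrable_const
  set T := J (fun _ v => ‖v‖) a b γ + 1 with hT
  have hJ0 : 0 ≤ J (fun _ v => ‖v‖) a b γ := (norm_nonneg _).trans (norm_sub_le_J hγ hab.le)
  have hTp : 0 < T := by positivity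
  have hTL : T ≤ L + 1 := by linarith
  have hgT : ∫ r in a..b, g r = T := by
    have : ∫ r in a..b, g r = (∫ r in a..b, ‖deriv γ1 r‖) + ∫ _ in a..b, δ :=
      intervalIntegral.integral_add (hni a b) intervalIntegrable_const
    rw [this, intervalIntegral.integral_const, hT, ← heJ, hδ, smul_eq_mul, mul_one_div_cancel hba.ne']
    rfl
  let σ : ℝ → ℝ := fun t => (1 / T) * ∫ r in a..t, g r
  have hσd : ∀ x y, σ y - σ x = (1 / T) * ∫ r in x..y, g r := by
    intro x y
    simp only [σ]
    rw [← mul_sub, intervalIntegral.integral_interval_sub_left (hgi a y) (hgi a x)]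
  have hup : ∀ x y, x ≤ y → σ y - σ x ≤ (1 / T) * ((K + δ) * (y - x)) := by
    intro x y hxy
    rw [hσd]
    refine mul_le_mul_of_nonneg_left ?_ (by positivity)
    have : ∫ r in x..y, g r ≤ ∫ _ in x..y, (K + δ) :=
      intervalIntegral.integral_mono_on hxy (hgi x y) intervalIntegrable_const
        (fun r _ => add_le_add (norm_deriv_le_of_lipschitz hγ1) le_rfl)
    rw [intervalIntegral.integral_const, smul_eq_mul] at this
    linarith
  have hlo : ∀ x y, x ≤ y → (δ / T) * (y - x) ≤ σ y - σ x := by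
    intro x y hxy
    rw [hσd]
    have : ∫ _ in x..y, δ ≤ ∫ r in x..y, g r :=
      intervalIntegral.integral_mono_on hxy intervalIntegrable_const (hgi x y)
        (fun r _ => by simp only [hg]; linarith [norm_nonneg (deriv γ1 r)])
    rw [intervalIntegral.integral_const, smul_eq_mul] at this
    calc _ = (1 / T) * ((y - x) * δ) := by ring
      _ ≤ _ := mul_le_mul_of_nonneg_left this (by positivity)
  have hδT : 0 < δ / T := by positivity
  have hmono : StrictMono σ := by
    intro x y hxy
    have := hlo x y hxy.le
    have : 0 < (δ / T) * (y - x) := mul_pos hδT (sub_pos.2 hxy)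
    linarith
  have hσL : LipschitzWith (Real.toNNReal ((1 / T) * (K + δ))) σ := by
    have hnn : 0 ≤ (1 / T) * (K + δ) := by have := K.2; positivity
    apply LipschitzWith.of_dist_le_mul
    intro x y
    rw [Real.coe_toNNReal _ hnn]
    rcases le_total x y with hxy | hxy
    · rw [dist_comm, dist_comm x y, Real.dist_eq, Real.dist_eq, abs_of_nonneg (sub_nonneg.2 hxy),
        abs_of_nonneg (sub_nonneg.2 (hmono.monotone hxy))]
      linarith [hup x y hxy]
    · rw [Real.dist_eq, Real.dist_eq, abs_of_nonneg (sub_nonneg.2 hxy),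
        abs_of_nonneg (sub_nonneg.2 (hmono.monotone hxy))]
      linarith [hup y x hxy]
  have hsurj : Function.Surjective σ := by
    apply hσL.continuous.surjective
    · refine tendsto_atTop_mono' atTop (f₁ := fun y => (δ / T) * (y - 0) + σ 0) ?_ ?_
      · filter_upwards [eventually_ge_atTop 0] with y hy
        linarith [hlo 0 y hy]
      · apply tendsto_atTop_add_const_right
        simp only [sub_zero]
        exact tendsto_id.const_mul_atTop hδT
    · refine tendsto_atBot_mono' atBot (f₁ := fun y => (δ / T) * y + σ 0) ?_ ?_
      · filter_upwards [eventually_le_atBot 0] with y hy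
        linarith [hlo y 0 hy]
      · apply tendsto_atBot_add_const_right
        exact tendsto_id.const_mul_atBot hδT
  let e := hmono.orderIsoOfSurjective σ hsurj
  have hσa : σ a = 0 := by simp [σ]
  have hσb : σ b = 1 := by simp only [σ, hgT]; field_simp
  have h1 : ∀ t, e.symm (σ t) = t := fun t => e.symm_apply_apply t
  have h2 : ∀ t, σ (e.symm t) = t := fun t => e.apply_symm_apply t
  refine ⟨γ1 ∘ e.symm, ⟨lip_of ?_, ?_, ?_⟩, ?_⟩
  · intro x y hxy
    have hst : e.symm x ≤ e.symm y := e.symm.monotone hxy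
    have b1 := norm_sub_le_J hll hst
    have b2 : J (fun _ v => ‖v‖) (e.symm x) (e.symm y) γ1 ≤ ∫ r in (e.symm x)..(e.symm y), g r :=
      intervalIntegral.integral_mono_on hst (hni _ _) (hgi _ _) (fun r _ => by simp only [hg]; linarith)
    have b3 := hσd (e.symm x) (e.symm y)
    rw [h2, h2] at b3
    have b4 : ∫ r in (e.symm x)..(e.symm y), g r = T * (y - x) := by rw [b3]; field_simp
    push_cast
    calc _ ≤ T * (y - x) := by rw [← b4]; exact b1.trans b2
      _ ≤ _ := mul_le_mul_of_nonneg_right hTL (sub_nonneg.2 hxy)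
  · have : e.symm 0 = a := by rw [← hσa]; exact h1 a
    simp only [Function.comp, this]
    exact heq (left_mem_Icc.2 hab.le)
  · have : e.symm 1 = b := by rw [← hσb]; exact h1 b
    simp only [Function.comp, this]
    exact heq (right_mem_Icc.2 hab.le)
  · intro Φ hΦ
    have := J_reparam hΦ hδT hσL hlo h1 h2 e.symm.continuous hll hab.le
    rw [hσa, hσb] at this
    rw [this, heJ]

lemma ΦE_hom (F : ℝ × ℝ → ℝ) : Hom (ΦE F) := by
  intro p v c hc
  unfold ΦE; rw [en_smul c hc]; ring

lemma ΦA_hom : Hom ΦA := by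
  intro p v c hc
  simp [ΦA]; ring

lemma arclen_G {γ : ℝ → ℝ × ℝ} (hγ : LocallyLipschitz γ) {a b : ℝ} (hab : a < b) {L : ℝ≥0}
    (hL : J (fun _ v => ‖v‖) a b γ ≤ L) (F : ℝ × ℝ → ℝ) (κ A : ℝ) :
    ∃ β, KC (L + 1) (γ a) (γ b) β ∧ Gf F κ A 0 1 β = Gf F κ A a b γ := by
  obtain ⟨β, h1, h2⟩ := arclen hγ hab hL
  refine ⟨β, h1, ?_⟩
  unfold Gf
  rw [h2 _ (ΦE_hom F), h2 _ ΦA_hom]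

lemma KC.mono {Λ Λ' : ℝ≥0} (h : Λ ≤ Λ') {pm pp : ℝ × ℝ} {γ : ℝ → ℝ × ℝ} (hγ : KC Λ pm pp γ) : KC Λ' pm pp γ :=
  ⟨hγ.1.weaken h, hγ.2⟩

/-- Existence of a global minimizer of the penalized functional which avoids the wells. -/
lemma global_min {F : ℝ × ℝ → ℝ} {pm pp : ℝ × ℝ} {R C c : ℝ} (hB : FB F pm pp R C c)
    {C0 : ℝ} {h : ℝ × ℝ → ℝ} (hA : AreaP F R C0 h) {κ : ℝ} (hκ : 0 ≤ κ) (hκC : κ * C0 ≤ 1 / 2)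
    {E1 : ℝ} (hconf : ∀ a b : ℝ, ∀ γ : ℝ → ℝ × ℝ, LocallyLipschitz γ → γ a = pm →
      J (ΦE F) a b γ ≤ E1 → ∀ t ∈ Icc a b, ‖γ t‖ ≤ R)
    {γ0 : ℝ → ℝ × ℝ} (hγ0 : IsCurve 0 1 γ0 pm pp) {A : ℝ} (hA0 : Gf F κ A 0 1 γ0 ≤ E1) :
    ∃ a b γ, IsCurve a b γ pm pp ∧ (∀ t ∈ Ioo a b, γ t ≠ pm ∧ γ t ≠ pp) ∧
      (∀ t ∈ Icc a b, ‖γ t‖ ≤ R) ∧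
      ∀ a' b' γ', IsCurve a' b' γ' pm pp → Gf F κ A a b γ ≤ Gf F κ A a' b' γ' := by
  obtain ⟨e, he, hE⟩ := E_low hB
  have hC := hB.Cpos
  -- normalization of the reference curve
  have hJn : ∀ a b, ∀ γ : ℝ → ℝ × ℝ, LocallyLipschitz γ → a ≤ b → 0 ≤ J (fun _ v => ‖v‖) a b γ :=
    fun a b γ hγ hab => (norm_nonneg _).trans (norm_sub_le_J hγ hab)
  obtain ⟨LL, hLL⟩ : ∃ L : ℝ≥0, J (fun _ v => ‖v‖) 0 1 γ0 ≤ L := ⟨Real.toNNReal _, Real.le_coe_toNNReal _⟩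
  obtain ⟨β0, hβ0, hGβ0⟩ := arclen_G hγ0.2.1 zero_lt_one hLL F κ A
  rw [hγ0.2.2.1, hγ0.2.2.2] at hβ0
  set Λ0 : ℝ≥0 := LL + 1 with hΛ0
  set L0 : ℝ := 2 * (6 * C) / (c * √e) * (2 * √E1) with hL0
  have hL0n : 0 ≤ L0 := by have := hB.cpos; positivity
  -- key claim
  have key : ∀ Λ : ℝ≥0, Λ0 ≤ Λ → ∀ γ, KC Λ pm pp γ →
      (∀ β, KC Λ pm pp β → Gf F κ A 0 1 γ ≤ Gf F κ A 0 1 β) →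
      (∀ t ∈ Icc (0:ℝ) 1, ‖γ t‖ ≤ R) ∧
      ∃ β, KC (⟨L0, hL0n⟩ + 1) pm pp β ∧ Gf F κ A 0 1 β ≤ Gf F κ A 0 1 γ := by
    intro Λ hΛ γ hγ hmin
    have hll := hγ.1.locallyLipschitz
    have hG : Gf F κ A 0 1 γ ≤ E1 := by
      have := hmin β0 (hβ0.mono hΛ)
      rw [hGβ0] at this
      exact this.trans hA0
    have hEE : J (ΦE F) 0 1 γ ≤ E1 := by
      refine le_trans ?_ hG
      unfold Gf
      have : 0 ≤ κ * |J ΦA 0 1 γ - A| := by positivity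
      linarith
    have hR := hconf 0 1 γ hll hγ.2.1 hEE
    refine ⟨hR, ?_⟩
    have hpb := piece_bound hB hA hκ hκC hγ hmin hR
    obtain ⟨α, β, h1, h2, h3, e1, e2, hw⟩ := hitting hll.continuous zero_le_one hB.ne hγ.2.1 hγ.2.2
    have hRI : ∀ r ∈ Icc α β, ‖γ r‖ ≤ R := fun r hr => hR r ⟨h1.trans hr.1, hr.2.trans h3⟩
    have hlen := length_bound hB hll h2 e1 e2 hRI hw (D := 6 * C) (by positivity) he
      (fun t ht => (JE_sub hB.cont hB.nn hll h1 ht.1 le_rfl).trans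
        (hpb t ⟨h1.trans ht.1, ht.2.trans h3⟩).1)
      (fun t ht => (JE_sub hB.cont hB.nn hll le_rfl ht.2 h3).trans
        (hpb t ⟨h1.trans ht.1, ht.2.trans h3⟩).2)
      (hE α β h2.le γ hll hRI e1 e2)
    have hlen2 : J (fun _ v => ‖v‖) α β γ ≤ L0 := by
      refine hlen.trans ?_
      have hc := hB.cpos
      refine mul_le_mul_of_nonneg_left ?_ (by positivity)
      have := (JE_sub hB.cont hB.nn hll h1 h2.le h3).trans hEE
      gcongr
    obtain ⟨η, hη, hGη⟩ := arclen_G hll h2 (L := ⟨L0, hL0n⟩) hlen2 F κ A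
    rw [e1, e2] at hη
    refine ⟨η, hη, ?_⟩
    rw [hGη]
    exact restrict_le hB.cont hB.nn hA hκ hκC A hll h1 h3 h2.le hR (e1.trans hγ.2.1.symm) (e2.trans hγ.2.2.symm)
  set Λ1 : ℝ≥0 := max Λ0 (⟨L0, hL0n⟩ + 1) with hΛ1
  obtain ⟨γ, hγ, hmin⟩ := exists_min_K hB.cont hB.nn hκ A Λ1 pm pp ⟨β0, hβ0.mono (le_max_left _ _)⟩
  have hll := hγ.1.locallyLipschitz
  have hR := (key Λ1 (le_max_left _ _) γ hγ hmin).1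
  obtain ⟨α, β, h1, h2, h3, e1, e2, hw⟩ := hitting hll.continuous zero_le_one hB.ne hγ.2.1 hγ.2.2
  refine ⟨α, β, γ, ⟨h2.le, hll, e1, e2⟩, hw, fun r hr => hR r ⟨h1.trans hr.1, hr.2.trans h3⟩, ?_⟩
  intro a' b' γ' hγ'
  refine (restrict_le hB.cont hB.nn hA hκ hκC A hll h1 h3 h2.le hR (e1.trans hγ.2.1.symm) (e2.trans hγ.2.2.symm)).trans ?_
  have hab' : a' < b' := by
    refine lt_of_le_of_ne hγ'.1 fun h => hB.ne ?_
    rw [← hγ'.2.2.1, ← hγ'.2.2.2, h]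
  obtain ⟨LL2, hLL2⟩ : ∃ L : ℝ≥0, J (fun _ v => ‖v‖) a' b' γ' ≤ L := ⟨Real.toNNReal _, Real.le_coe_toNNReal _⟩
  obtain ⟨η, hη, hGη⟩ := arclen_G hγ'.2.1 hab' hLL2 F κ A
  rw [hγ'.2.2.1, hγ'.2.2.2] at hη
  set Λ2 : ℝ≥0 := max Λ0 (LL2 + 1) with hΛ2
  obtain ⟨ξ, hξ, hξmin⟩ := exists_min_K hB.cont hB.nn hκ A Λ2 pm pp ⟨β0, hβ0.mono (le_max_left _ _)⟩
  obtain ⟨-, ζ, hζ, hζle⟩ := key Λ2 (le_max_left _ _) ξ hξ hξmin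
  rw [← hGη]
  exact (hmin ζ (hζ.mono (le_max_right _ _))).trans (hζle.trans (hξmin η (hη.mono (le_max_right _ _))))

def shE (q : ℝ × ℝ) : ℝ × ℝ := (q.2 / (q.1 ^ 2 + q.2 ^ 2), -q.1 / (q.1 ^ 2 + q.2 ^ 2))

def shL (q pm p : ℝ × ℝ) : ℝ := Lq q (p - pm)

def shG (q pm p : ℝ × ℝ) : ℝ := shL q pm p * (1 - shL q pm p)

def shear (q pm : ℝ × ℝ) (s : ℝ) (p : ℝ × ℝ) : ℝ × ℝ := p + (s * shG q pm p) • shE q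

def shearD (q pm : ℝ × ℝ) (s : ℝ) (p v : ℝ × ℝ) : ℝ × ℝ :=
  v + (s * ((1 - 2 * shL q pm p) * Lq q v)) • shE q

lemma shE_prop (q v : ℝ × ℝ) : (shE q).1 * v.2 - (shE q).2 * v.1 = Lq q v := by
  rw [Lq_apply]; simp only [shE]; ring

lemma shL_fd (q pm p : ℝ × ℝ) : HasFDerivAt (shL q pm) (Lq q) p := by
  unfold shL
  simp only [map_sub]
  exact (Lq q).hasFDerivAt.sub_const _

lemma shG_fd (q pm p : ℝ × ℝ) : HasFDerivAt (shG q pm) ((1 - 2 * shL q pm p) • Lq q) p := by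
  have := (shL_fd q pm p).mul ((shL_fd q pm p).const_sub 1)
  refine this.congr_fderiv ?_
  ext <;> simp <;> ring

lemma shL_cd (q pm : ℝ × ℝ) : ContDiff ℝ 1 (shL q pm) := by
  unfold shL; fun_prop

lemma shG_cd (q pm : ℝ × ℝ) : ContDiff ℝ 1 (shG q pm) := by
  have := shL_cd q pm
  unfold shG; fun_prop

lemma shear_fd (q pm : ℝ × ℝ) (s : ℝ) {γ : ℝ → ℝ × ℝ} {t : ℝ} (h : DifferentiableAt ℝ γ t) :
    deriv (shear q pm s ∘ γ) t = shearD q pm s (γ t) (deriv γ t) := by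
  have h1 := (((shG_fd q pm (γ t)).comp_hasDerivAt t h.hasDerivAt).const_mul s).smul_const (shE q)
  have h2 := h.hasDerivAt.add h1
  exact h2.deriv

lemma shear_ll (q pm : ℝ × ℝ) (s : ℝ) {γ : ℝ → ℝ × ℝ} (h : LocallyLipschitz γ) :
    LocallyLipschitz (shear q pm s ∘ γ) := by
  have hc : ContDiff ℝ 1 (shear q pm s) := by
    have := shG_cd q pm
    unfold shear; fun_prop
  exact hc.locallyLipschitz.comp h

lemma shear_J (q pm : ℝ × ℝ) (s : ℝ) {γ : ℝ → ℝ × ℝ} (h : LocallyLipschitz γ)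
    (Φ : ℝ × ℝ → ℝ × ℝ → ℝ) (a b : ℝ) :
    J Φ a b (shear q pm s ∘ γ) = J (fun p v => Φ (shear q pm s p) (shearD q pm s p v)) a b γ := by
  apply intervalIntegral.integral_congr_ae
  filter_upwards [ll_ae_diff h] with t ht _
  simp only [shear_fd q pm s ht, Function.comp]

lemma shL_m (q pm : ℝ × ℝ) : shL q pm pm = 0 := by simp [shL]

lemma shL_p {pm pp : ℝ × ℝ} (h : pm ≠ pp) : shL (pp - pm) pm pp = 1 :=
  Lq_self (sub_ne_zero.2 h.symm)

lemma shear_curve {pm pp : ℝ × ℝ} (h : pm ≠ pp) (s : ℝ) {a b : ℝ} {γ : ℝ → ℝ × ℝ}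
    (hγ : IsCurve a b γ pm pp) : IsCurve a b (shear (pp - pm) pm s ∘ γ) pm pp := by
  refine ⟨hγ.1, shear_ll _ _ _ hγ.2.1, ?_, ?_⟩
  · simp [Function.comp, hγ.2.2.1, shear, shG, shL_m]
  · simp [Function.comp, hγ.2.2.2, shear, shG, shL_p h]

lemma shear_area {pm pp : ℝ × ℝ} (h : pm ≠ pp) (s : ℝ) {a b : ℝ} {γ : ℝ → ℝ × ℝ}
    (hγ : IsCurve a b γ pm pp) :
    J ΦA a b (shear (pp - pm) pm s ∘ γ) = J ΦA a b γ + s / 6 := by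
  set q := pp - pm with hq
  rw [shear_J _ _ _ hγ.2.1]
  let H : ℝ × ℝ → ℝ := fun p => s * (shE q).2 * (p.1 * shG q pm p)
    + s ^ 2 * (shE q).1 * (shE q).2 / 2 * (shG q pm p * shG q pm p)
    + s * (shL q pm p * shL q pm p / 2 - shL q pm p * (shL q pm p * shL q pm p) / 3)
  have hHc : ContDiff ℝ 1 H := by
    have h1 := shG_cd q pm
    have h2 := shL_cd q pm
    simp only [H]; fun_prop
  have hd : ∀ p v, fderiv ℝ H p v = ΦA (shear q pm s p) (shearD q pm s p v) - ΦA p v := by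
    intro p v
    have g1 := shG_fd q pm p
    have g2 := shL_fd q pm p
    have g3 : HasFDerivAt (fun p : ℝ × ℝ => p.1) (ContinuousLinearMap.fst ℝ ℝ ℝ) p := hasFDerivAt_fst
    have g4 := (((g3.mul g1).const_mul (s * (shE q).2)).add
      ((g1.mul g1).const_mul (s ^ 2 * (shE q).1 * (shE q).2 / 2))).add
      ((((g2.mul g2).mul_const (2:ℝ)⁻¹).sub ((g2.mul (g2.mul g2)).mul_const (3:ℝ)⁻¹)).const_mul s)
    have g5 : HasFDerivAt H _ p := g4
    rw [g5.fderiv]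
    have hp := shE_prop q v
    simp [ΦA, shear, shearD, shG]
    rw [← hp]
    ring
  have e := ftc_comp hHc hγ.2.1 a b
  have hH : H (γ b) - H (γ a) = s / 6 := by
    rw [hγ.2.2.1, hγ.2.2.2]
    simp only [H, shG, shL_m, shL_p h, hq]
    ring
  rw [hH] at e
  rw [← e]
  unfold J
  rw [← intervalIntegral.integral_add (J_int ΦA_cont hγ.2.1 a b) (J_int (fderiv_cont hHc) hγ.2.1 a b)]
  apply intervalIntegral.integral_congr
  intro t _
  simp only [hd]
  ring

lemma alg_y {r1 r2 k2 k3 k4 k5 τ : ℝ} (h1 : |r1| ≤ k2) (h2 : |r2| ≤ k5) (k3p : 0 ≤ k3) (k4p : 0 ≤ k4)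
    (hτ : |τ| ≤ 1) :
    (1 + τ * r1 + k3 * τ ^ 2) * (1 + τ * r2 + k4 * τ ^ 2) ≤
      1 + τ * (r1 + r2) + ((k2 + k5) ^ 2 + k2 * k5 + k2 * k4 + k3 * k5 + k3 * k4 + k3 + k4) * τ ^ 2 ∧
    0 ≤ 1 + τ * (r1 + r2) + ((k2 + k5) ^ 2 + k2 * k5 + k2 * k4 + k3 * k5 + k3 * k4 + k3 + k4) * τ ^ 2 := by
  have k2p : 0 ≤ k2 := (abs_nonneg _).trans h1
  have k5p : 0 ≤ k5 := (abs_nonneg _).trans h2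
  have t2 : τ ^ 2 ≤ 1 := by rw [← sq_abs]; exact pow_le_one₀ (abs_nonneg _) hτ
  have t0 : 0 ≤ τ ^ 2 := sq_nonneg _
  have a1 : r1 * r2 ≤ k2 * k5 := by
    refine (le_abs_self _).trans ?_
    rw [abs_mul]; gcongr
  have a2 : τ * r1 ≤ k2 := by
    refine (le_abs_self _).trans ?_
    rw [abs_mul]
    calc _ ≤ 1 * k2 := by gcongr
      _ = _ := one_mul _
  have a3 : τ * r2 ≤ k5 := by
    refine (le_abs_self _).trans ?_
    rw [abs_mul]
    calc _ ≤ 1 * k5 := by gcongr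
      _ = _ := one_mul _
  constructor
  · have b1 := mul_le_mul_of_nonneg_left a1 t0
    have b2 := mul_le_mul_of_nonneg_left a2 (mul_nonneg k4p t0)
    have b3 := mul_le_mul_of_nonneg_left a3 (mul_nonneg k3p t0)
    have b4 := mul_le_mul_of_nonneg_left t2 (mul_nonneg (mul_nonneg k3p k4p) t0)
    have b5 : 0 ≤ (k2 + k5) ^ 2 * τ ^ 2 := by positivity
    nlinarith
  · have b : |τ * (r1 + r2)| ≤ |τ| * (k2 + k5) := by
      rw [abs_mul]; gcongr
      exact (abs_add_le _ _).trans (add_le_add h1 h2)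
    have b' := neg_le_of_abs_le b
    have b5 : 0 ≤ (k2 * k5 + k2 * k4 + k3 * k5 + k3 * k4 + k3 + k4) * τ ^ 2 := by positivity
    have b6 : |τ| ^ 2 = τ ^ 2 := sq_abs _
    nlinarith [sq_nonneg (|τ| * (k2 + k5) - 1 / 2)]

lemma ip_cs (v w : ℝ × ℝ) : |v.1 * w.1 + v.2 * w.2| ≤ enorm2 v * enorm2 w := by
  refine abs_le_of_sq_le_sq ?_ (mul_nonneg (en_nonneg _) (en_nonneg _))
  rw [mul_pow, en_sq, en_sq]
  nlinarith [sq_nonneg (v.1 * w.2 - v.2 * w.1)]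

set_option maxHeartbeats 1000000 in
lemma shear_pt {W : ℝ × ℝ → ℝ} {pm pp : ℝ × ℝ} (hW : TwoWell W pm pp) {F : ℝ × ℝ → ℝ}
    (hF : F = fun p => Real.sqrt (W p)) (R : ℝ) (hm : ‖pm‖ ≤ R) (hp : ‖pp‖ ≤ R) :
    ∃ K, 0 ≤ K ∧ ∀ p v : ℝ × ℝ, ‖p‖ ≤ R → ∃ r : ℝ, ∀ τ : ℝ, |τ| ≤ 1 →
      ΦE F (shear (pp - pm) pm τ p) (shearD (pp - pm) pm τ p v) ≤
        ΦE F p v * (1 + τ * r + K * τ ^ 2) := by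
  set q := pp - pm with hq
  have hR : 0 ≤ R := (norm_nonneg _).trans hm
  set l := ‖Lq q‖ with hl
  have hl0 : 0 ≤ l := norm_nonneg _
  set k1 := l ^ 2 * ‖shE q‖ with hk1
  have hk1p : 0 ≤ k1 := by positivity
  set R' := R + k1 * ((2 * R) * (2 * R)) with hR'
  have hRR : R ≤ R' := by rw [hR']; nlinarith [mul_nonneg hk1p (mul_nonneg hR hR)]
  obtain ⟨C, hC, c, hc, f1, f2, f3, -, -⟩ := W_facts hW R' (hm.trans hRR) (hp.trans hRR)
  set k2 := C * k1 / c with hk2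
  set k3 := C * k1 ^ 2 / c with hk3
  set M := (1 + 2 * (l * (2 * R))) * l with hM
  set k4 := M ^ 2 * enorm2 (shE q) ^ 2 with hk4
  set k5 := 2 * (M * enorm2 (shE q)) with hk5
  have hM0 : 0 ≤ M := by positivity
  have hen0 := en_nonneg (shE q)
  set K := (k2 + k5) ^ 2 + k2 * k5 + k2 * k4 + k3 * k5 + k3 * k4 + k3 + k4 with hK
  have hk2p : 0 ≤ k2 := by positivity
  have hk3p : 0 ≤ k3 := by positivity
  have hk4p : 0 ≤ k4 := by positivity
  have hk5p : 0 ≤ k5 := by positivity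
  have hKp : 0 ≤ K := by positivity
  refine ⟨K / 2, by positivity, fun p v hpR => ?_⟩
  set X := shG q pm p • shE q with hX
  set ρ := ‖p - pm‖ * ‖p - pp‖ with hρ
  have hρ0 : 0 ≤ ρ := by positivity
  have hm2 : ‖p - pm‖ ≤ 2 * R := (norm_sub_le _ _).trans (by linarith)
  have hp2 : ‖p - pp‖ ≤ 2 * R := (norm_sub_le _ _).trans (by linarith)
  have hLm : |shL q pm p| ≤ l * ‖p - pm‖ := (Lq q).le_opNorm _
  have hLp : |1 - shL q pm p| ≤ l * ‖p - pp‖ := by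
    have e1 : 1 - shL q pm p = - Lq q (p - pp) := by
      have e0 : Lq q pp - Lq q pm = 1 := by
        rw [← map_sub]; exact Lq_self (sub_ne_zero.2 hW.wells_ne.symm)
      simp only [shL, map_sub]; linarith
    rw [e1, abs_neg]
    exact (Lq q).le_opNorm _
  have hg : |shG q pm p| ≤ l ^ 2 * ρ := by
    unfold shG
    rw [abs_mul]
    calc _ ≤ (l * ‖p - pm‖) * (l * ‖p - pp‖) := by gcongr
      _ = _ := by rw [hρ]; ring
  have hXn : ‖X‖ ≤ k1 * ρ := by
    rw [hX, norm_smul, Real.norm_eq_abs]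
    calc _ ≤ (l ^ 2 * ρ) * ‖shE q‖ := by gcongr
      _ = _ := by rw [hk1]; ring
  have hWp := f3 p (hpR.trans hRR)
  have hW0 := hW.nonneg p
  have hρW : ρ ^ 2 ≤ W p / c := by rw [le_div_iff₀ hc]; linarith
  have hDX : |fderiv ℝ W p X| ≤ k2 * W p := by
    calc _ ≤ ‖fderiv ℝ W p‖ * ‖X‖ := (fderiv ℝ W p).le_opNorm _
      _ ≤ (C * ρ) * (k1 * ρ) := by gcongr; exact f2 p (hpR.trans hRR)
      _ = C * k1 * ρ ^ 2 := by ring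
      _ ≤ C * k1 * (W p / c) := by gcongr
      _ = _ := by rw [hk2]; ring
  have hCX : C * ‖X‖ ^ 2 ≤ k3 * W p := by
    calc _ ≤ C * (k1 * ρ) ^ 2 := by gcongr
      _ = C * k1 ^ 2 * ρ ^ 2 := by ring
      _ ≤ C * k1 ^ 2 * (W p / c) := by gcongr
      _ = _ := by rw [hk3]; ring
  obtain ⟨r1, hr1, hr1e⟩ : ∃ r1, |r1| ≤ k2 ∧ fderiv ℝ W p X = W p * r1 := by
    rcases hW0.eq_or_lt with h0 | h0
    · refine ⟨0, by simpa using hk2p, ?_⟩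
      rw [← h0, mul_zero] at hDX
      rw [mul_zero]; exact abs_nonpos_iff.1 hDX
    · refine ⟨fderiv ℝ W p X / W p, ?_, by field_simp⟩
      rw [abs_div, abs_of_pos h0, div_le_iff₀ h0]; exact hDX
  set m := (1 - 2 * shL q pm p) * Lq q v with hmdef
  set N := enorm2 v with hN
  have hN0 : 0 ≤ N := en_nonneg v
  have hmM : |m| ≤ M * N := by
    rw [hmdef, abs_mul]
    have : |1 - 2 * shL q pm p| ≤ 1 + 2 * (l * (2 * R)) := by
      calc _ ≤ |(1:ℝ)| + |2 * shL q pm p| := abs_sub _ _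
        _ = 1 + 2 * |shL q pm p| := by rw [abs_one, abs_mul, abs_two]
        _ ≤ 1 + 2 * (l * ‖p - pm‖) := by gcongr
        _ ≤ _ := by gcongr
    have h2 : |Lq q v| ≤ l * N := ((Lq q).le_opNorm v).trans (by gcongr; exact norm_le_en v)
    calc _ ≤ (1 + 2 * (l * (2 * R))) * (l * N) := by gcongr
      _ = _ := by rw [hM]; ring
  set ip := v.1 * (shE q).1 + v.2 * (shE q).2 with hip
  have hipb : |ip| ≤ N * enorm2 (shE q) := ip_cs v (shE q)
  obtain ⟨r2, hr2, hr2e⟩ : ∃ r2, |r2| ≤ k5 ∧ 2 * (m * ip) = N ^ 2 * r2 := by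
    have hb : |2 * (m * ip)| ≤ k5 * N ^ 2 := by
      rw [abs_mul, abs_mul, abs_two]
      calc _ ≤ 2 * ((M * N) * (N * enorm2 (shE q))) := by gcongr
        _ = _ := by rw [hk5]; ring
    rcases hN0.eq_or_lt with h0 | h0
    · refine ⟨0, by simpa using hk5p, ?_⟩
      rw [← h0] at hb
      rw [mul_zero]; apply abs_nonpos_iff.1; simpa using hb
    · refine ⟨2 * (m * ip) / N ^ 2, ?_, by field_simp⟩
      rw [abs_div, abs_of_pos (by positivity : 0 < N ^ 2), div_le_iff₀ (by positivity)]; exact hb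
  refine ⟨(r1 + r2) / 2, fun τ hτ => ?_⟩
  obtain ⟨hy1, hy0⟩ := alg_y (τ := τ) hr1 hr2 hk3p hk4p hτ
  rw [← hK] at hy1 hy0
  set y := 1 + τ * (r1 + r2) + K * τ ^ 2 with hy
  have hsh : shear q pm τ p = p + τ • X := by rw [shear, hX, smul_smul]
  have hτX : ‖τ • X‖ ≤ ‖X‖ := by
    rw [norm_smul, Real.norm_eq_abs]
    calc _ ≤ 1 * ‖X‖ := by gcongr
      _ = _ := one_mul _
  have hpX : ‖p + τ • X‖ ≤ R' := by
    refine (norm_add_le _ _).trans ?_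
    have : ‖X‖ ≤ k1 * ((2 * R) * (2 * R)) := hXn.trans (by rw [hρ]; gcongr)
    rw [hR']; linarith
  have hWb : W (p + τ • X) ≤ W p * (1 + τ * r1 + k3 * τ ^ 2) := by
    have := (abs_le.1 (f1 p (τ • X) (hpR.trans hRR) hpX)).2
    rw [map_smul, smul_eq_mul, hr1e, norm_smul, Real.norm_eq_abs, mul_pow, sq_abs] at this
    have h2 := mul_le_mul_of_nonneg_left hCX (sq_nonneg τ)
    linarith only [h2, this]
  have hNb : enorm2 (shearD q pm τ p v) ^ 2 ≤ N ^ 2 * (1 + τ * r2 + k4 * τ ^ 2) := by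
    have e1 : enorm2 (shearD q pm τ p v) ^ 2
        = N ^ 2 + τ * (2 * (m * ip)) + τ ^ 2 * (m ^ 2 * enorm2 (shE q) ^ 2) := by
      rw [en_sq, hN, en_sq, en_sq, hip]
      simp only [shearD, ← hmdef, Prod.fst_add, Prod.snd_add, Prod.smul_fst, Prod.smul_snd, smul_eq_mul]
      ring
    have hm2 : m ^ 2 ≤ (M * N) ^ 2 := sq_le_sq' (neg_le_of_abs_le hmM) (le_of_abs_le hmM)
    have h3 : τ ^ 2 * (m ^ 2 * enorm2 (shE q) ^ 2) ≤ τ ^ 2 * ((M * N) ^ 2 * enorm2 (shE q) ^ 2) := by gcongr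
    have e3 : N ^ 2 * (1 + τ * r2 + k4 * τ ^ 2)
        = N ^ 2 + τ * (N ^ 2 * r2) + τ ^ 2 * ((M * N) ^ 2 * enorm2 (shE q) ^ 2) := by
      rw [hk4]; ring
    rw [e1, hr2e, e3]
    linarith only [h3]
  unfold ΦE
  have hFs : ∀ p, F p = √(W p) := fun p => by rw [hF]
  rw [hsh, hFs, hFs]
  have hprod : W (p + τ • X) * enorm2 (shearD q pm τ p v) ^ 2 ≤ (W p * N ^ 2) * y := by
    calc _ ≤ (W p * (1 + τ * r1 + k3 * τ ^ 2)) * (N ^ 2 * (1 + τ * r2 + k4 * τ ^ 2)) :=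
          mul_le_mul hWb hNb (sq_nonneg _) ((hW.nonneg _).trans hWb)
      _ = (W p * N ^ 2) * ((1 + τ * r1 + k3 * τ ^ 2) * (1 + τ * r2 + k4 * τ ^ 2)) := by ring
      _ ≤ _ := by gcongr
  have hs := Real.sqrt_le_sqrt hprod
  rw [Real.sqrt_mul (hW.nonneg _), Real.sqrt_sq (en_nonneg _), Real.sqrt_mul (by positivity),
    Real.sqrt_mul hW0, Real.sqrt_sq hN0] at hs
  have hsy : √y ≤ 1 + τ * ((r1 + r2) / 2) + K / 2 * τ ^ 2 := by
    have h4 : √y ≤ (1 + y) / 2 := by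
      linarith only [Real.sq_sqrt hy0, sq_nonneg (√y - 1)]
    linarith only [h4, hy]
  exact hs.trans (mul_le_mul_of_nonneg_left hsy (by positivity))

lemma shear_conv {W : ℝ × ℝ → ℝ} {pm pp : ℝ × ℝ} (hW : TwoWell W pm pp) {F : ℝ × ℝ → ℝ}
    (hF : F = fun p => Real.sqrt (W p)) (R : ℝ) (hm : ‖pm‖ ≤ R) (hp : ‖pp‖ ≤ R) :
    ∃ K, 0 ≤ K ∧ ∀ a b γ, IsCurve a b γ pm pp → (∀ t ∈ Icc a b, ‖γ t‖ ≤ R) →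
      ∀ σ s t : ℝ, |σ| = 1 → 0 < s → s ≤ 1 → 0 < t → t ≤ 1 →
      t * J (ΦE F) a b (shear (pp - pm) pm (-(σ * s)) ∘ γ) + s * J (ΦE F) a b (shear (pp - pm) pm (σ * t) ∘ γ)
        ≤ (s + t) * (1 + K * (s * t)) * J (ΦE F) a b γ := by
  obtain ⟨K, hK, hpt⟩ := shear_pt hW hF R hm hp
  refine ⟨K, hK, fun a b γ hγ hR σ s t hσ hs hs1 ht ht1 => ?_⟩
  have hFc : Continuous F := by
    rw [hF]; exact hW.smooth.continuous.sqrt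
  have hll := hγ.2.1
  rw [shear_J _ _ _ hll, shear_J _ _ _ hll]
  have hcont : ∀ τ, Continuous (Function.uncurry (fun p v => ΦE F (shear (pp - pm) pm τ p) (shearD (pp - pm) pm τ p v))) := by
    intro τ
    have h1 := (shG_cd (pp - pm) pm).continuous
    have h2 := (shL_cd (pp - pm) pm).continuous
    have h3 : Continuous (fun x : (ℝ × ℝ) × (ℝ × ℝ) => (shear (pp - pm) pm τ x.1, shearD (pp - pm) pm τ x.1 x.2)) := by
      unfold shear shearD; fun_prop
    exact (ΦE_cont hFc).comp h3
  have key := intervalIntegral.integral_mono_on hγ.1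
    (((J_int (hcont (-(σ * s))) hll a b).const_mul t).add ((J_int (hcont (σ * t)) hll a b).const_mul s))
    ((J_int (ΦE_cont hFc) hll a b).const_mul ((s + t) * (1 + K * (s * t)))) ?_
  · rw [intervalIntegral.integral_add ((J_int (hcont (-(σ * s))) hll a b).const_mul t)
      ((J_int (hcont (σ * t)) hll a b).const_mul s), intervalIntegral.integral_const_mul,
      intervalIntegral.integral_const_mul, intervalIntegral.integral_const_mul] at key
    exact key
  · intro x hx
    obtain ⟨r, hr⟩ := hpt (γ x) (deriv γ x) (hR x hx)
    have h1 := hr (-(σ * s)) (by rw [abs_neg, abs_mul, hσ, one_mul, abs_of_pos hs]; exact hs1)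
    have h2 := hr (σ * t) (by rw [abs_mul, hσ, one_mul, abs_of_pos ht]; exact ht1)
    have h1' := mul_le_mul_of_nonneg_left h1 ht.le
    have h2' := mul_le_mul_of_nonneg_left h2 hs.le
    have hσ2 : σ ^ 2 = 1 := by rw [← sq_abs, hσ, one_pow]
    refine (add_le_add h1' h2').trans (le_of_eq ?_)
    have e1 : (-(σ * s)) ^ 2 = s ^ 2 := by rw [neg_sq, mul_pow, hσ2, one_mul]
    have e2 : (σ * t) ^ 2 = t ^ 2 := by rw [mul_pow, hσ2, one_mul]
    rw [e1, e2]
    ring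

/-- for `A` close enough to `𝒜(γ₀)`, the isoperimetric problem has a solution
which meets the wells only at its endpoints (no bubbles through the wells). -/
theorem existence_no_bubbles
    (W : ℝ × ℝ → ℝ) (pm pp : ℝ × ℝ) (hW : TwoWell W pm pp)
    (F : ℝ × ℝ → ℝ) (hF : F = fun p => Real.sqrt (W p))
    (γ0 : ℝ → ℝ × ℝ) (hγ0 : IsCurve 0 1 γ0 pm pp)
    (hmin : ∀ a b γ, IsCurve a b γ pm pp → degLen F 0 1 γ0 ≤ degLen F a b γ) :
    ∃ ε1 > (0:ℝ), ∀ A : ℝ, |A - sArea 0 1 γ0| < ε1 →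
      ∃ a b γ, IsoSol F pm pp A a b γ ∧
        ∀ t ∈ Set.Ioo a b, γ t ≠ pm ∧ γ t ≠ pp := by
  have hF0 : ∀ p, 0 ≤ F p := by rw [hF]; exact fun p => Real.sqrt_nonneg _
  set E0 := J (ΦE F) 0 1 γ0 with hE0
  have hE0n : 0 ≤ E0 := JE_nn hF0 zero_le_one γ0
  have hmin' : ∀ a b γ, IsCurve a b γ pm pp → E0 ≤ J (ΦE F) a b γ := hmin
  obtain ⟨R, hm, hp, hconf⟩ := confine hW hF (E0 + 1) (by linarith)
  obtain ⟨C, c, hB⟩ := FB_of hW hF R hm hp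
  obtain ⟨C0, hC0, h, hA⟩ := area_prim hB
  obtain ⟨K, hK, hsc⟩ := shear_conv hW hF R hm hp
  set κ := min 1 (1 / (2 * C0)) with hκ
  have hκp : 0 < κ := by positivity
  have hκ1 : κ ≤ 1 := min_le_left _ _
  have hκC : κ * C0 ≤ 1 / 2 := by
    calc _ ≤ 1 / (2 * C0) * C0 := by gcongr; exact min_le_right _ _
      _ = _ := by field_simp
  set s := min 1 (κ / (48 * (K + 1) * (E0 + 1))) with hs
  have hsp : 0 < s := by positivity
  have hs1 : s ≤ 1 := min_le_left _ _
  have hsK : 2 * K * (E0 + 1) * s ≤ κ / 24 := by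
    calc _ ≤ 2 * (K + 1) * (E0 + 1) * (κ / (48 * (K + 1) * (E0 + 1))) := by
          gcongr
          · linarith
          · exact min_le_right _ _
      _ = _ := by field_simp; norm_num
  refine ⟨s / 24, by positivity, fun A hAA => ?_⟩
  have hAeq : sArea 0 1 γ0 = J ΦA 0 1 γ0 := sArea_eq hγ0.2.1 0 1
  rw [hAeq, abs_sub_comm] at hAA
  have hG0 : Gf F κ A 0 1 γ0 ≤ E0 + 1 := by
    unfold Gf
    have : κ * |J ΦA 0 1 γ0 - A| ≤ 1 * 1 := by gcongr; linarith
    linarith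
  obtain ⟨a, b, γ, hγ, hw, hR, hGmin⟩ := global_min hB hA hκp.le hκC hconf hγ0 hG0
  have hEup : J (ΦE F) a b γ + κ * |J ΦA a b γ - A| ≤ E0 + κ * |J ΦA 0 1 γ0 - A| := hGmin 0 1 γ0 hγ0
  have hκabs : 0 ≤ κ * |J ΦA a b γ - A| := by positivity
  have hE1 : J (ΦE F) a b γ ≤ E0 + 1 := by
    have : Gf F κ A 0 1 γ0 = E0 + κ * |J ΦA 0 1 γ0 - A| := rfl
    linarith
  have hEn : 0 ≤ J (ΦE F) a b γ := JE_nn hF0 hγ.1 γ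
  have harea : J ΦA a b γ = A := by
    by_contra hne
    set d := |J ΦA a b γ - A| with hd
    have hdp : 0 < d := abs_pos.2 (sub_ne_zero.2 hne)
    obtain ⟨t, ht, hts, htd⟩ : ∃ t, 0 < t ∧ t ≤ s ∧ t / 6 ≤ d :=
      ⟨min s d, by positivity, min_le_left _ _, by linarith [min_le_right s d]⟩
    obtain ⟨σ, hσ, hσd⟩ : ∃ σ : ℝ, |σ| = 1 ∧ |J ΦA a b γ + σ * t / 6 - A| = d - t / 6 := by
      rcases le_total (J ΦA a b γ) A with hle | hle
      · refine ⟨1, abs_one, ?_⟩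
        rw [abs_of_nonpos (sub_nonpos.2 hle)] at hd
        rw [abs_of_nonpos (by linarith)]; linarith
      · refine ⟨-1, by simp, ?_⟩
        rw [abs_of_nonneg (sub_nonneg.2 hle)] at hd
        rw [abs_of_nonneg (by linarith)]; linarith
    have hne' := hW.wells_ne
    have c1 := hsc a b γ hγ hR σ s t hσ hsp hs1 ht (hts.trans hs1)
    have c2 := hmin' a b _ (shear_curve hne' (-(σ * s)) hγ)
    have c3 := hGmin a b _ (shear_curve hne' (σ * t) hγ)
    unfold Gf at c3
    rw [shear_area hne' (σ * t) hγ, hσd, ← hd] at c3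
    have c4 : J (ΦE F) a b γ + κ * (t / 6) ≤ J (ΦE F) a b (shear (pp - pm) pm (σ * t) ∘ γ) := by linarith
    have c5 : J (ΦE F) a b γ - κ * (s / 24) ≤ J (ΦE F) a b (shear (pp - pm) pm (-(σ * s)) ∘ γ) := by
      have : κ * |J ΦA 0 1 γ0 - A| ≤ κ * (s / 24) := by gcongr
      linarith
    have c6 := mul_le_mul_of_nonneg_left c4 hsp.le
    have c7 := mul_le_mul_of_nonneg_left c5 ht.le
    have c8 : (s + t) * (K * (s * t)) * J (ΦE F) a b γ ≤ (2 * s) * (K * (s * t)) * (E0 + 1) := by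
      gcongr; linarith
    have c9 := mul_le_mul_of_nonneg_left hsK (mul_nonneg hsp.le ht.le)
    have c10 : 0 < κ * (s * t) := by positivity
    nlinarith
  refine ⟨a, b, γ, ⟨hγ, ?_, ?_⟩, hw⟩
  · rw [sArea_eq hγ.2.1]; exact harea
  · intro a' b' γ' hγ' hA'
    rw [sArea_eq hγ'.2.1] at hA'
    have h1 := hGmin a' b' γ' hγ'
    unfold Gf at h1
    have hA'' : J ΦA a' b' γ' = A := hA'
    rw [harea, hA''] at h1
    simp only [sub_self, abs_zero, mul_zero, add_zero] at h1
    exact h1
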